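/- Let η_♥(t) = e^{−t²/2}, let δ ∈ ℝ, and let F_δ be the Mellin transform of η_♥(t)e(δt). Let χ be a primitive Dirichlet character mod q, q ≥ 1. Assume all nontrivial zeros ρ of L(s,χ) with |Im(ρ)| ≤ T₀ satisfy Re(ρ) = 1/2, where T₀ ≥ max(4π²|δ|, 100). Then ∑_{ρ nontrivial, |Im(ρ)| > T₀} |F_δ(ρ)| ≤ log(qT₀/2π) · (4.329 e^{−0.1598 T₀} + 0.802 |δ| e^{−0.1065 (T₀/(π|δ|))²}). -/

import Mathlib

open MeasureTheory Set

/-- `e(t) = e^{2πit}`. -/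
noncomputable def e2pi (t : ℝ) : ℂ := Complex.exp (2 * Real.pi * Complex.I * t)

/-- `F_δ`, the Mellin transform of `η♥(t) e(δt)` with `η♥(t) = e^{-t²/2}`. -/
noncomputable def Fdelta (δ : ℝ) (s : ℂ) : ℂ :=
  mellin (fun t => (Real.exp (-t^2 / 2) : ℂ) * e2pi (δ * t)) s

namespace HZ

lemma norm_gaussSum {q : ℕ} [NeZero q] {χ : DirichletCharacter ℂ q} (hχ : χ.IsPrimitive) :
    ‖gaussSum χ (ZMod.stdAddChar (N := q))‖ = Real.sqrt q := by
  have h1 := congrFun (ZMod.dft_dft (χ : ZMod q → ℂ)) (-1)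
  have h2 : ZMod.dft (χ : ZMod q → ℂ) = fun k => χ⁻¹ (-k) * gaussSum χ ZMod.stdAddChar := by
    ext k; exact hχ.fourierTransform_eq_inv_mul_gaussSum k
  rw [h2, ZMod.dft_apply] at h1
  have h3 : ∑ j : ZMod q, ZMod.stdAddChar (-(j * -1)) • (χ⁻¹ (-j) * gaussSum χ ZMod.stdAddChar)
      = gaussSum χ⁻¹ (ZMod.stdAddChar (N := q))⁻¹ * gaussSum χ ZMod.stdAddChar := by
    rw [gaussSum.eq_1 χ⁻¹, Finset.sum_mul, ← Equiv.sum_comp (Equiv.neg (ZMod q))]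
    refine Finset.sum_congr rfl fun j _ => ?_
    simp only [Equiv.neg_apply, neg_neg, mul_neg, mul_one, AddChar.inv_apply, smul_eq_mul]
    ring
  rw [h3, ← star_gaussSum_eq] at h1
  simp only [neg_neg, map_one, smul_eq_mul, mul_one] at h1
  have h4 := congrArg norm h1
  rw [norm_mul, norm_star, Complex.norm_natCast] at h4
  rw [eq_comm, Real.sqrt_eq_iff_mul_self_eq (by positivity) (norm_nonneg _)]
  linarith

lemma norm_LSeries_le {f : ℕ → ℂ} (hf : ∀ n, ‖f n‖ ≤ 1) {s : ℂ} (hs : 2 ≤ s.re) :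
    ‖LSeries f s‖ ≤ Real.pi ^ 2 / 6 := by
  have hsum := hasSum_zeta_two
  unfold LSeries
  refine tsum_of_norm_bounded hsum fun n => ?_
  rcases eq_or_ne n 0 with rfl | hn
  · simp
  · rw [LSeries.norm_term_eq, if_neg hn]
    have hn1 : (1:ℝ) ≤ n := by exact_mod_cast Nat.one_le_iff_ne_zero.mpr hn
    have : (n:ℝ)^2 ≤ (n:ℝ) ^ s.re := by
      rw [← Real.rpow_two]; exact Real.rpow_le_rpow_of_exponent_le hn1 hs
    gcongr
    exact hf n

lemma norm_L_le {q : ℕ} [NeZero q] (χ : DirichletCharacter ℂ q) {s : ℂ} (hs : 2 ≤ s.re) :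
    ‖χ.LFunction s‖ ≤ Real.pi ^ 2 / 6 := by
  rw [χ.LFunction_eq_LSeries (by linarith)]
  exact norm_LSeries_le (fun n => χ.norm_le_one _) hs

lemma norm_L_ge {q : ℕ} [NeZero q] (χ : DirichletCharacter ℂ q) {s : ℂ} (hs : 2 ≤ s.re) :
    1 ≤ ‖χ.LFunction s‖ * (Real.pi ^ 2 / 6) := by
  rw [χ.LFunction_eq_LSeries (by linarith)]
  have h := congrArg norm (DirichletCharacter.LSeries.mul_mu_eq_one χ (s := s) (by linarith))
  rw [norm_mul, norm_one] at h
  rw [← h]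
  refine mul_le_mul_of_nonneg_left ?_ (norm_nonneg _)
  refine norm_LSeries_le (fun n => ?_) hs
  rw [Pi.mul_apply, norm_mul]
  refine mul_le_one₀ (χ.norm_le_one _) (norm_nonneg _) ?_
  rw [Complex.norm_intCast]
  exact_mod_cast ArithmeticFunction.abs_moebius_le_one

lemma norm_Gamma_one_add_sq (u : ℝ) :
    ‖Complex.Gamma (1 + u * Complex.I)‖ ^ 2 * Real.sinh (Real.pi * u) = Real.pi * u := by
  rcases eq_or_ne u 0 with rfl | hu
  · simp
  have h1 : Complex.Gamma (1 + u * Complex.I) = (u * Complex.I) * Complex.Gamma (u * Complex.I) := by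
    rw [add_comm, Complex.Gamma_add_one]
    simp [hu]
  have h2 := Complex.Gamma_mul_Gamma_one_sub (u * Complex.I)
  have h3 : Complex.Gamma (1 - u * Complex.I) = (starRingEnd ℂ) (Complex.Gamma (1 + u * Complex.I)) := by
    rw [← Complex.Gamma_conj]; simp [sub_eq_add_neg]
  have h4 : Complex.Gamma (1 + u * Complex.I) * Complex.Gamma (1 - u * Complex.I) * Complex.sin (Real.pi * (u * Complex.I)) = (u * Complex.I) * Real.pi := by
    rw [h1, mul_assoc (_ * _), mul_comm (_ * _), mul_assoc, mul_comm (Complex.Gamma (1 - _))]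
    have hs : Complex.sin (Real.pi * (u * Complex.I)) ≠ 0 := by
      rw [← mul_assoc, Complex.sin_mul_I]
      refine mul_ne_zero ?_ Complex.I_ne_zero
      rw [← Complex.ofReal_mul, ← Complex.ofReal_sinh]
      refine Complex.ofReal_ne_zero.mpr ?_
      rw [Ne, Real.sinh_eq_zero]
      exact mul_ne_zero Real.pi_ne_zero hu
    have h5 : Complex.Gamma (u * Complex.I) * Complex.Gamma (1 - u * Complex.I) * Complex.sin (Real.pi * (u * Complex.I)) = Real.pi := by
      rw [h2, div_mul_cancel₀ _ hs]
    linear_combination (u * Complex.I) * h5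
  rw [h3, Complex.mul_conj, ← mul_assoc, Complex.sin_mul_I, ← Complex.ofReal_mul, ← Complex.ofReal_sinh, Complex.normSq_eq_norm_sq] at h4
  have h6 : ((‖Complex.Gamma (1 + u * Complex.I)‖ ^ 2 * Real.sinh (Real.pi * u) : ℝ) : ℂ) * Complex.I = ((Real.pi * u : ℝ) : ℂ) * Complex.I := by
    push_cast at h4 ⊢; linear_combination h4
  exact_mod_cast mul_right_cancel₀ Complex.I_ne_zero h6

/-- `x cosh x ≤ (|x|+1) |sinh|` type bound. -/
lemma x_coth {x : ℝ} (hx : 0 ≤ x) : x * Real.cosh x ≤ (x + 1) * Real.sinh x := by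
  have h := Real.add_one_le_exp (2 * x)
  have h1 : Real.cosh x - Real.sinh x = Real.exp (-x) := Real.cosh_sub_sinh x
  have h2 : Real.sinh x = (Real.exp x - Real.exp (-x)) / 2 := Real.sinh_eq x
  have h3 : Real.exp x = Real.exp (2 * x) * Real.exp (-x) := by rw [← Real.exp_add]; ring_nf
  have h4 := Real.exp_pos (-x)
  nlinarith

lemma Gamma_cosh (u : ℝ) :
    (‖Complex.Gamma (1 + u * Complex.I)‖ * (2 * Real.cosh (Real.pi * u / 2))) ^ 2 ≤ 2 * Real.pi * (|u| + 1) := by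
  wlog hu : 0 ≤ u with H
  · have := H (-u) (by linarith)
    rw [abs_neg] at this
    convert this using 3
    · rw [← Complex.norm_conj, ← Complex.Gamma_conj]; simp
    · rw [← Real.cosh_neg]; ring_nf
  rw [abs_of_nonneg hu]
  rcases hu.eq_or_lt with rfl | hu
  · simp; have := Real.pi_gt_three; linarith
  have h := norm_Gamma_one_add_sq u
  have h1 := x_coth (x := Real.pi * u / 2) (by positivity)
  have h2 : Real.sinh (Real.pi * u) = 2 * Real.sinh (Real.pi * u / 2) * Real.cosh (Real.pi * u / 2) := by
    rw [← Real.sinh_two_mul]; ring_nf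
  have hs : 0 < Real.sinh (Real.pi * u / 2) := Real.sinh_pos_iff.mpr (by positivity)
  have hc : 0 < Real.cosh (Real.pi * u / 2) := Real.cosh_pos _
  set g := ‖Complex.Gamma (1 + u * Complex.I)‖
  set S := Real.sinh (Real.pi * u / 2)
  set C := Real.cosh (Real.pi * u / 2)
  have hpi := Real.pi_gt_three
  have h3 : (g * (2 * C)) ^ 2 * S = 2 * Real.pi * u * C := by
    rw [h2] at h; linear_combination (2 * C) * h
  have h4 : (g * (2 * C)) ^ 2 * S ≤ (2 * Real.pi * (u + 1)) * S := by
    rw [h3]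
    nlinarith
  exact le_of_mul_le_mul_right h4 hs

lemma Gamma_four (u : ℝ) :
    ‖Complex.Gamma (4 + u * Complex.I)‖ * (2 * Real.cosh (Real.pi * u / 2))
      ≤ Real.sqrt (2 * Real.pi) * (|u| + 3) ^ (7/2 : ℝ) := by
  have h1 : Complex.Gamma (4 + u * Complex.I) = (3 + u * Complex.I) * ((2 + u * Complex.I) * ((1 + u * Complex.I) * Complex.Gamma (1 + u * Complex.I))) := by
    have e1 : (1 + u * Complex.I) ≠ 0 := fun h => by simpa using congrArg Complex.re h
    have e2 : (2 + u * Complex.I) ≠ 0 := fun h => by simpa using congrArg Complex.re h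
    have e3 : (3 + u * Complex.I) ≠ 0 := fun h => by simpa using congrArg Complex.re h
    rw [← Complex.Gamma_add_one _ e1, show (1 + u * Complex.I + 1 : ℂ) = 2 + u * Complex.I by ring,
      ← Complex.Gamma_add_one _ e2, show (2 + u * Complex.I + 1 : ℂ) = 3 + u * Complex.I by ring,
      ← Complex.Gamma_add_one _ e3, show (3 + u * Complex.I + 1 : ℂ) = 4 + u * Complex.I by ring]
  have hn : ∀ k : ℝ, 0 ≤ k → k ≤ 3 → ‖(k + u * Complex.I : ℂ)‖ ≤ |u| + 3 := by
    intro k hk hk3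
    refine (norm_add_le _ _).trans ?_
    simp [abs_of_nonneg hk]; linarith
  have g := Gamma_cosh u
  rw [h1]
  simp only [norm_mul]
  have a1 := hn 1 (by norm_num) (by norm_num)
  have a2 := hn 2 (by norm_num) (by norm_num)
  have a3 := hn 3 (by norm_num) (by norm_num)
  push_cast at a1 a2 a3
  set G := ‖Complex.Gamma (1 + u * Complex.I)‖
  set C := Real.cosh (Real.pi * u / 2)
  have hC : 0 < C := Real.cosh_pos _
  have hG : 0 ≤ G := norm_nonneg _
  have hu := abs_nonneg u
  have g1 : G * (2 * C) ≤ Real.sqrt (2 * Real.pi) * (|u| + 3) ^ (1/2 : ℝ) := by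
    rw [← Real.sqrt_eq_rpow, ← Real.sqrt_mul (by positivity)]
    refine Real.le_sqrt_of_sq_le (g.trans ?_)
    gcongr; norm_num
  have hp : (|u| + 3) ^ (7/2 : ℝ) = (|u| + 3) ^ 3 * (|u| + 3) ^ (1/2 : ℝ) := by
    rw [← Real.rpow_natCast, ← Real.rpow_add (by positivity)]; norm_num
  rw [hp]
  calc ‖3 + u * Complex.I‖ * (‖2 + u * Complex.I‖ * (‖1 + u * Complex.I‖ * G)) * (2 * C)
      = (‖3 + u * Complex.I‖ * ‖2 + u * Complex.I‖ * ‖1 + u * Complex.I‖) * (G * (2 * C)) := by ring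
    _ ≤ ((|u| + 3) * (|u| + 3) * (|u| + 3)) * (Real.sqrt (2 * Real.pi) * (|u| + 3) ^ (1/2 : ℝ)) := by
        gcongr
    _ = _ := by ring

/-- Left edge bound. -/
lemma left_edge {q : ℕ} [NeZero q] {χ : DirichletCharacter ℂ q} (hχ : χ.IsPrimitive) (u : ℝ) :
    ‖χ.LFunction (-3 + u * Complex.I)‖ ≤ (q * (|u| + 3) / (2 * Real.pi)) ^ (7/2 : ℝ) * (Real.pi ^ 2 / 6) := by
  set s : ℂ := 4 + (-u : ℝ) * Complex.I with hs
  have hsre : s.re = 4 := by simp [hs]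
  have e : (-3 + u * Complex.I : ℂ) = 1 - s := by rw [hs]; push_cast; ring
  rw [e, DirichletCharacter.LFunction, ZMod.LFunction_one_sub]
  rotate_left
  · intro n h; have := congrArg Complex.re h; rw [hsre] at this; simp at this
    have : (0:ℝ) ≤ n := by positivity
    linarith
  · right; intro h; have := congrArg Complex.re h; rw [hsre] at this; simp at this
  have h2 : ZMod.dft (χ : ZMod q → ℂ) = fun k => (χ⁻¹ (-1) * gaussSum χ ZMod.stdAddChar) * χ⁻¹ k := by
    ext k; rw [hχ.fourierTransform_eq_inv_mul_gaussSum k, ← neg_one_mul k, map_mul]; ring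
  have h3 : ZMod.dft (fun x => χ (-x)) = fun k => (χ (-1) * (χ⁻¹ (-1) * gaussSum χ ZMod.stdAddChar)) * χ⁻¹ k := by
    have : (fun x => χ (-x)) = (χ (-1)) • (χ : ZMod q → ℂ) := by
      ext x; rw [← neg_one_mul x, map_mul]; rfl
    rw [this, map_smul, h2]; ext k; simp; ring
  have hc : ∀ c : ℂ, ZMod.LFunction (fun k => c * χ⁻¹ k) s = c * (χ⁻¹).LFunction s := by
    intro c
    simp only [DirichletCharacter.LFunction, ZMod.LFunction, mul_assoc, Finset.mul_sum]
    refine Finset.sum_congr rfl fun j _ => by ring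
  rw [h2, h3, hc, hc]
  have hL := norm_L_le χ⁻¹ (s := s) (by rw [hsre]; norm_num)
  have hg := norm_gaussSum hχ
  have hx1 : ‖χ (-1)‖ ≤ 1 := χ.norm_le_one _
  have hx2 : ‖χ⁻¹ (-1)‖ ≤ 1 := (χ⁻¹).norm_le_one _
  have hq : (0:ℝ) < q := by exact_mod_cast NeZero.pos q
  have hpi := Real.pi_pos
  have n1 : ‖(q : ℂ) ^ (s - 1)‖ = (q:ℝ) ^ (3:ℝ) := by
    rw [← Complex.ofReal_natCast, Complex.norm_cpow_eq_rpow_re_of_pos hq]; simp [hsre]; norm_num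
  have n2 : ‖(2 * Real.pi : ℂ) ^ (-s)‖ = (2 * Real.pi) ^ (-4:ℝ) := by
    rw [show (2 * Real.pi : ℂ) = ((2 * Real.pi : ℝ) : ℂ) by push_cast; rfl,
      Complex.norm_cpow_eq_rpow_re_of_pos (by positivity)]; simp [hsre]
  have n3 : ‖Complex.exp (Real.pi * Complex.I * s / 2)‖ = Real.exp (Real.pi * u / 2) := by
    rw [Complex.norm_exp]; congr 1; simp [hs]
  have n4 : ‖Complex.exp (-Real.pi * Complex.I * s / 2)‖ = Real.exp (-(Real.pi * u / 2)) := by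
    rw [Complex.norm_exp]; congr 1; simp [hs]; ring
  have hG := Gamma_four (-u)
  rw [abs_neg, ← hs, show Real.cosh (Real.pi * -u / 2) = Real.cosh (Real.pi * u / 2) by
    rw [← Real.cosh_neg]; ring_nf] at hG
  set Lf := (χ⁻¹).LFunction s
  set g := gaussSum χ (ZMod.stdAddChar (N := q))
  have hA : ‖Complex.exp (Real.pi * Complex.I * s / 2) * (χ⁻¹ (-1) * g * Lf)
      + Complex.exp (-Real.pi * Complex.I * s / 2) * (χ (-1) * (χ⁻¹ (-1) * g) * Lf)‖
      ≤ (2 * Real.cosh (Real.pi * u / 2)) * (Real.sqrt q * (Real.pi ^ 2 / 6)) := by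
    refine (norm_add_le _ _).trans ?_
    have p1 : ‖χ⁻¹ (-1) * g * Lf‖ ≤ Real.sqrt q * (Real.pi ^ 2 / 6) := by
      rw [norm_mul, norm_mul, hg]
      gcongr
      exact mul_le_of_le_one_left (by positivity) hx2
    have p2 : ‖χ (-1) * (χ⁻¹ (-1) * g) * Lf‖ ≤ Real.sqrt q * (Real.pi ^ 2 / 6) := by
      rw [mul_assoc, norm_mul]
      exact (mul_le_of_le_one_left (norm_nonneg _) hx1).trans p1
    rw [norm_mul, norm_mul _ (χ (-1) * _ * _), n3, n4, Real.cosh_eq]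
    have e1 := Real.exp_pos (Real.pi * u / 2)
    have e2 := Real.exp_pos (-(Real.pi * u / 2))
    nlinarith
  calc _ = (q:ℝ) ^ (3:ℝ) * (2 * Real.pi) ^ (-4:ℝ) * ‖Complex.Gamma s‖ * ‖Complex.exp (Real.pi * Complex.I * s / 2) * (χ⁻¹ (-1) * g * Lf)
      + Complex.exp (-Real.pi * Complex.I * s / 2) * (χ (-1) * (χ⁻¹ (-1) * g) * Lf)‖ := by
        rw [norm_mul, norm_mul, norm_mul, n1, n2]
    _ ≤ (q:ℝ) ^ (3:ℝ) * (2 * Real.pi) ^ (-4:ℝ) * ‖Complex.Gamma s‖ * ((2 * Real.cosh (Real.pi * u / 2)) * (Real.sqrt q * (Real.pi ^ 2 / 6))) := by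
        gcongr
    _ = (q:ℝ) ^ (3:ℝ) * (2 * Real.pi) ^ (-4:ℝ) * (‖Complex.Gamma s‖ * (2 * Real.cosh (Real.pi * u / 2))) * (Real.sqrt q * (Real.pi ^ 2 / 6)) := by ring
    _ ≤ (q:ℝ) ^ (3:ℝ) * (2 * Real.pi) ^ (-4:ℝ) * (Real.sqrt (2 * Real.pi) * (|u| + 3) ^ (7/2 : ℝ)) * (Real.sqrt q * (Real.pi ^ 2 / 6)) := by
        gcongr
    _ = _ := by
        rw [Real.div_rpow (by positivity) (by positivity), Real.mul_rpow (x := (q:ℝ)) (by positivity) (by positivity),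
          show (7/2:ℝ) = 3 + 1/2 by norm_num, Real.rpow_add hq, Real.sqrt_eq_rpow, Real.sqrt_eq_rpow,
          div_eq_mul_inv _ ((2 * Real.pi) ^ _), ← Real.rpow_neg (by positivity),
          show (-(3 + 1/2) : ℝ) = -4 + 1/2 by norm_num, Real.rpow_add (by positivity : 0 < 2 * Real.pi)]
        ring

end HZ

namespace HZ

lemma strong_bound {P : WeakFEPair ℂ} (hP : IsStrongFEPair P) (a b : ℝ) :
    ∃ K, ∀ s : ℂ, a ≤ s.re → s.re ≤ b → ‖P.Λ s‖ ≤ K := by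
  have h1 : ∀ s : ℂ, IntegrableOn (fun t : ℝ => t ^ (s.re - 1) * ‖P.f t‖) (Ioi 0) := by
    intro s
    have := (hP.hasMellin s).1.norm
    refine IntegrableOn.congr_fun this (fun t ht => ?_) measurableSet_Ioi
    simp only [norm_smul]
    rw [Complex.norm_cpow_eq_rpow_re_of_pos ht]; simp
  have ha := h1 (a : ℂ)
  have hb := h1 (b : ℂ)
  simp only [Complex.ofReal_re] at ha hb
  refine ⟨∫ t in Ioi (0:ℝ), (t ^ (a - 1) * ‖P.f t‖ + t ^ (b - 1) * ‖P.f t‖), fun s hs1 hs2 => ?_⟩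
  rw [← (hP.hasMellin s).2, mellin]
  refine (norm_integral_le_integral_norm _).trans ?_
  have h3 : ∀ t ∈ Ioi (0:ℝ), ‖(t : ℂ) ^ (s - 1) • P.f t‖ = t ^ (s.re - 1) * ‖P.f t‖ := by
    intro t ht
    rw [norm_smul, Complex.norm_cpow_eq_rpow_re_of_pos ht]; simp
  rw [setIntegral_congr_fun measurableSet_Ioi h3]
  refine setIntegral_mono_on (h1 s) (ha.add hb) measurableSet_Ioi fun t ht => ?_
  have ht0 : (0:ℝ) < t := ht
  rw [← add_mul]
  gcongr
  rcases le_total 1 t with h | h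
  · have := Real.rpow_le_rpow_of_exponent_le h (show s.re - 1 ≤ b - 1 by linarith)
    have := Real.rpow_nonneg ht0.le (a - 1)
    linarith
  · have := Real.rpow_le_rpow_of_exponent_ge ht0 h (show a - 1 ≤ s.re - 1 by linarith)
    have := Real.rpow_nonneg ht0.le (b - 1)
    linarith

lemma weak_bound (P : WeakFEPair ℂ) (a b : ℝ) :
    ∃ K, ∀ s : ℂ, a ≤ s.re → s.re ≤ b → ‖P.Λ₀ s‖ ≤ K := by
  obtain ⟨K, hK⟩ := strong_bound P.isStrongFEPair_toStrongFEPair a b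
  refine ⟨K, fun s h1 h2 => ?_⟩
  rw [WeakFEPair.Λ₀]
  have := P.isStrongFEPair_toStrongFEPair.Λ_eq
  have h3 := hK s h1 h2
  rw [this] at h3
  exact h3

lemma cpow_bound (q : ℕ) [NeZero q] (s : ℂ) (h1 : -3 ≤ s.re) : ‖(q:ℂ) ^ (-s)‖ ≤ (q:ℝ) ^ (3:ℝ) := by
  have hq : (0:ℝ) < q := by exact_mod_cast NeZero.pos q
  have hq1 : (1:ℝ) ≤ q := by exact_mod_cast NeZero.pos q
  rw [← Complex.ofReal_natCast, Complex.norm_cpow_eq_rpow_re_of_pos hq]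
  exact Real.rpow_le_rpow_of_exponent_le hq1 (by simp; linarith)

lemma completed_bound {q : ℕ} [NeZero q] (χ : DirichletCharacter ℂ q) :
    ∃ K, ∀ s : ℂ, -3 ≤ s.re → s.re ≤ 2 → 1 ≤ |s.im| → ‖χ.completedLFunction s‖ ≤ K := by
  choose KE hKE using fun j : ZMod q => weak_bound (HurwitzZeta.hurwitzEvenFEPair (ZMod.toAddCircle j)) (-3/2) 1
  choose KO hKO using fun j : ZMod q => strong_bound (HurwitzZeta.isStrong_hurwitzOddFEPair (ZMod.toAddCircle j)) (-1) (3/2)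
  refine ⟨(q:ℝ) ^ (3:ℝ) * ∑ j, ‖χ j‖ * (KE j / 2) + (q:ℝ) ^ (3:ℝ) * ∑ j, ‖χ j‖ * (KO j / 2)
    + (q:ℝ) ^ (3:ℝ) * ‖χ 0‖ + (q:ℝ) ^ (3:ℝ) * ‖∑ j, χ j‖, fun s h1 h2 h3 => ?_⟩
  have hN := cpow_bound q s h1
  have hs1 : 1 ≤ ‖s‖ := h3.trans (Complex.abs_im_le_norm s)
  have hs2 : 1 ≤ ‖1 - s‖ := by
    refine le_trans ?_ (Complex.abs_im_le_norm (1 - s)); simpa using h3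
  rw [DirichletCharacter.completedLFunction, ZMod.completedLFunction_eq, ZMod.completedLFunction₀]
  refine (norm_sub_le _ _).trans (add_le_add ((norm_sub_le _ _).trans (add_le_add ((norm_add_le _ _).trans (add_le_add ?_ ?_)) ?_)) ?_)
  · rw [norm_mul]
    refine mul_le_mul hN ?_ (norm_nonneg _) (by positivity)
    refine (norm_sum_le _ _).trans (Finset.sum_le_sum fun j _ => ?_)
    rw [norm_mul, HurwitzZeta.completedHurwitzZetaEven₀, norm_div, Complex.norm_ofNat]
    gcongr
    exact hKE j _ (by simp; linarith) (by simp; linarith)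
  · rw [norm_mul]
    refine mul_le_mul hN ?_ (norm_nonneg _) (by positivity)
    refine (norm_sum_le _ _).trans (Finset.sum_le_sum fun j _ => ?_)
    rw [norm_mul, HurwitzZeta.completedHurwitzZetaOdd, norm_div, Complex.norm_ofNat]
    gcongr
    exact hKO j _ (by simp; linarith) (by simp; linarith)
  · rw [norm_div, norm_mul]
    refine (div_le_self (by positivity) hs1).trans ?_
    gcongr
  · rw [norm_div, norm_mul]
    refine (div_le_self (by positivity) hs2).trans ?_
    gcongr

lemma norm_sin_le (w : ℂ) : ‖Complex.sin w‖ ≤ Real.exp |w.im| := by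
  rw [Complex.sin, norm_div, norm_mul, Complex.norm_I, Complex.norm_ofNat, mul_one]
  have h := norm_sub_le (Complex.exp (-w * Complex.I)) (Complex.exp (w * Complex.I))
  rw [Complex.norm_exp, Complex.norm_exp] at h
  have e1 : Real.exp ((-w * Complex.I).re) ≤ Real.exp |w.im| := Real.exp_le_exp.mpr (by simpa using le_abs_self _)
  have e2 : Real.exp ((w * Complex.I).re) ≤ Real.exp |w.im| := Real.exp_le_exp.mpr (by simpa using neg_le_abs _)
  linarith

lemma inv_Gamma_bound : ∃ K, 0 ≤ K ∧ ∀ z : ℂ, -3/2 ≤ z.re → z.re ≤ 3/2 → 1/2 ≤ |z.im| →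
    ‖(Complex.Gamma z)⁻¹‖ ≤ K * Real.exp (Real.pi * |z.im|) := by
  have hcont : ContinuousOn Real.Gamma (Icc (1/2) (7/2)) := by
    intro x hx
    refine (Real.differentiableAt_Gamma fun m => ?_).continuousAt.continuousWithinAt
    have : (0:ℝ) ≤ m := by positivity
    have := hx.1
    linarith
  obtain ⟨K, hK⟩ := isCompact_Icc.exists_bound_of_continuousOn hcont
  have hK0 : 0 ≤ K := (norm_nonneg _).trans (hK 1 (by constructor <;> norm_num))
  refine ⟨2 * K, by positivity, fun z h1 h2 h3 => ?_⟩
  have hz : z - 1 ≠ 0 := by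
    intro h; rw [sub_eq_zero.mp h] at h3; norm_num at h3
  have hg := Complex.Gamma_add_one (z - 1) hz
  rw [sub_add_cancel] at hg
  have hr := Complex.Gamma_mul_Gamma_one_sub (z - 1)
  have hsin : Complex.sin (Real.pi * (z - 1)) ≠ 0 := by
    rw [Ne, Complex.sin_eq_zero_iff]
    rintro ⟨k, hk⟩
    have := congrArg Complex.im hk
    simp [Real.pi_ne_zero] at this
    rw [this] at h3; norm_num at h3
  have hpi : (Real.pi : ℂ) ≠ 0 := by exact_mod_cast Real.pi_ne_zero
  have hG : Complex.Gamma (z - 1) ≠ 0 := by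
    intro h; rw [h, zero_mul] at hr
    exact div_ne_zero hpi hsin hr.symm
  have e : (Complex.Gamma z)⁻¹ = (z - 1)⁻¹ * (Complex.Gamma (1 - (z - 1)) * Complex.sin (Real.pi * (z - 1)) / Real.pi) := by
    rw [hg]
    have : Complex.Gamma (z - 1) * Complex.Gamma (1 - (z - 1)) * Complex.sin (Real.pi * (z - 1)) = Real.pi := by
      rw [hr, div_mul_cancel₀ _ hsin]
    rw [mul_inv]; congr 1
    rw [eq_div_iff hpi, inv_mul_eq_iff_eq_mul₀ hG, ← mul_assoc, this]
  rw [e, norm_mul, norm_inv, norm_div, norm_mul]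
  have a1 : ‖z - 1‖⁻¹ ≤ 2 := by
    have : 1/2 ≤ ‖z - 1‖ := le_trans (by simpa using h3) (Complex.abs_im_le_norm (z - 1))
    rw [inv_le_comm₀ (by linarith) (by norm_num)]; linarith
  have a2 : ‖Complex.Gamma (1 - (z - 1))‖ ≤ K := by
    have hre : (1 - (z - 1)).re = 2 - z.re := by simp; ring
    have hpos : 0 < (1 - (z - 1)).re := by rw [hre]; linarith
    refine le_trans ?_ ((le_abs_self _).trans (hK (2 - z.re) ⟨by linarith, by linarith⟩))
    rw [← hre, Complex.Gamma_eq_integral hpos, Real.Gamma_eq_integral hpos, Complex.GammaIntegral]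
    refine (norm_integral_le_integral_norm _).trans_eq (setIntegral_congr_fun measurableSet_Ioi fun t ht => ?_)
    have ht : (0:ℝ) < t := ht
    simp only [norm_mul, Complex.norm_cpow_eq_rpow_re_of_pos ht, Complex.norm_real, Real.norm_eq_abs, Real.abs_exp]
    simp
  have a3 := norm_sin_le (Real.pi * (z - 1))
  have a4 : |(Real.pi * (z - 1) : ℂ).im| = Real.pi * |z.im| := by
    simp [abs_mul, abs_of_pos Real.pi_pos]
  rw [a4] at a3
  have a5 : ‖(Real.pi : ℂ)‖ = Real.pi := by simp [abs_of_pos Real.pi_pos]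
  rw [a5, mul_assoc 2]
  refine mul_le_mul a1 ?_ (by positivity) (by norm_num)
  refine (div_le_self (by positivity) (by linarith [Real.pi_gt_three])).trans ?_
  gcongr

lemma inv_Gammaℝ_bound : ∃ K, 0 ≤ K ∧ ∀ z : ℂ, -3 ≤ z.re → z.re ≤ 3 → 1 ≤ |z.im| →
    ‖(Complex.Gammaℝ z)⁻¹‖ ≤ K * Real.exp (2 * |z.im|) := by
  obtain ⟨K, hK0, hK⟩ := inv_Gamma_bound
  refine ⟨Real.pi ^ (3/2:ℝ) * K, by positivity, fun z h1 h2 h3 => ?_⟩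
  rw [Complex.Gammaℝ_def, mul_inv, norm_mul, norm_inv, Complex.norm_cpow_eq_rpow_re_of_pos Real.pi_pos,
    ← Real.rpow_neg Real.pi_pos.le, mul_assoc]
  have hpi : 1 ≤ Real.pi := by linarith [Real.pi_gt_three]
  gcongr
  · simp; linarith
  · refine (hK (z / 2) (by simp; linarith) (by simp; linarith) (by simp [abs_div]; linarith)).trans ?_
    refine mul_le_mul_of_nonneg_left (Real.exp_le_exp.mpr ?_) hK0
    have e : |(z / 2).im| = |z.im| / 2 := by simp [abs_div]
    rw [e]; nlinarith [Real.pi_lt_four, abs_nonneg z.im]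

lemma exists_entire {q : ℕ} [NeZero q] (χ : DirichletCharacter ℂ q) :
    ∃ g : ℂ → ℂ, Differentiable ℂ g ∧ ∀ z, z ≠ 1 → g z = (z - 1) * χ.LFunction z := by
  rcases eq_or_ne χ 1 with rfl | h
  · refine ⟨_, DirichletCharacter.differentiable_LFunctionTrivChar₁ q, fun z hz => ?_⟩
    exact Function.update_of_ne hz _ _
  · refine ⟨fun z => (z - 1) * χ.LFunction z, ?_, fun z _ => rfl⟩
    have := DirichletCharacter.differentiable_LFunction h
    fun_prop

lemma crude {q : ℕ} [NeZero q] (χ : DirichletCharacter ℂ q) {g : ℂ → ℂ} (hg : Differentiable ℂ g)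
    (hgL : ∀ z, z ≠ 1 → g z = (z - 1) * χ.LFunction z) :
    ∃ K, 0 ≤ K ∧ ∀ z : ℂ, -3 ≤ z.re → z.re ≤ 2 → ‖g z‖ ≤ K * Real.exp (3 * |z.im|) := by
  obtain ⟨K1, hK1⟩ := completed_bound χ
  obtain ⟨K2, hK20, hK2⟩ := inv_Gammaℝ_bound
  have hcomp : IsCompact (Icc (-3:ℝ) 2 ×ℂ Icc (-1:ℝ) 1) := isCompact_Icc.reProdIm isCompact_Icc
  obtain ⟨K3, hK3⟩ := hcomp.exists_bound_of_continuousOn hg.continuous.continuousOn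
  have hK30 : 0 ≤ K3 := (norm_nonneg _).trans (hK3 0 (by rw [Complex.mem_reProdIm]; simp))
  have hK10 : 0 ≤ K1 := (norm_nonneg _).trans (hK1 Complex.I (by simp) (by simp) (by simp))
  refine ⟨4 * (K1 * K2) + K3, by positivity, fun z h1 h2 => ?_⟩
  rcases le_total |z.im| 1 with h | h
  · refine (hK3 z ?_).trans ?_
    · rw [Complex.mem_reProdIm]; exact ⟨⟨h1, h2⟩, abs_le.mp h⟩
    · have : 1 ≤ Real.exp (3 * |z.im|) := Real.one_le_exp (by positivity)
      have h4 : 0 ≤ K1 * K2 := by positivity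
      nlinarith
  · have hz1 : z ≠ 1 := by rintro rfl; norm_num at h
    have hz0 : z ≠ 0 := by rintro rfl; norm_num at h
    rw [hgL z hz1, χ.LFunction_eq_completed_div_gammaFactor z (Or.inl hz0), norm_mul, div_eq_mul_inv, norm_mul]
    have hgam : ‖(χ.gammaFactor z)⁻¹‖ ≤ K2 * Real.exp (2 * |z.im|) := by
      rcases χ.even_or_odd with he | ho
      · rw [he.gammaFactor_def]; exact hK2 z (by linarith) (by linarith) h
      · rw [ho.gammaFactor_def]
        have := hK2 (z + 1) (by simp; linarith) (by simp; linarith) (by simpa using h)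
        simpa using this
    have hz : ‖z - 1‖ ≤ 4 * Real.exp |z.im| := by
      refine (Complex.norm_le_abs_re_add_abs_im _).trans ?_
      have e1 : |(z - 1).re| ≤ 4 := by rw [abs_le]; constructor <;> simp <;> linarith
      have e2 := Real.add_one_le_exp |z.im|
      have e3 : (z - 1).im = z.im := by simp
      rw [e3]; nlinarith [abs_nonneg z.im]
    have hLc := hK1 z h1 h2 h
    calc ‖z - 1‖ * (‖χ.completedLFunction z‖ * ‖(χ.gammaFactor z)⁻¹‖)
        ≤ (4 * Real.exp |z.im|) * (K1 * (K2 * Real.exp (2 * |z.im|))) := by gcongr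
      _ = 4 * (K1 * K2) * Real.exp (3 * |z.im|) := by
          rw [show 3 * |z.im| = |z.im| + 2 * |z.im| by ring, Real.exp_add]; ring
      _ ≤ _ := by
          have := Real.exp_pos (3 * |z.im|)
          nlinarith

end HZ

namespace HZ

lemma ratio_bound {u t Y : ℝ} (ht : 95 ≤ t) (hY : t + 8 ≤ Y) :
    ((|u| + 3) / Y) ^ (7/2 : ℝ) * Real.exp (-(1/500) * (u - t) ^ 2) ≤ 1 := by
  have hY0 : 0 < Y := by linarith
  have hx : |u| ≤ t + |u - t| := by
    have := abs_add_le (u - t) t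
    rw [sub_add_cancel, abs_of_nonneg (by linarith : 0 ≤ t)] at this; linarith
  set x := |u - t| with hxd
  have hx0 : 0 ≤ x := abs_nonneg _
  have h1 : (|u| + 3) / Y ≤ Real.exp ((x - 5) / Y) := by
    refine le_trans ?_ (Real.add_one_le_exp _)
    rw [div_add_one hY0.ne']
    exact div_le_div_of_nonneg_right (by linarith) hY0.le
  have h2 : ((|u| + 3) / Y) ^ (7/2 : ℝ) ≤ Real.exp ((x - 5) / Y * (7/2)) := by
    rw [Real.exp_mul]
    exact Real.rpow_le_rpow (by positivity) h1 (by norm_num)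
  have h3 : (u - t) ^ 2 = x ^ 2 := by rw [hxd, sq_abs]
  rw [h3]
  calc _ ≤ Real.exp ((x - 5) / Y * (7/2)) * Real.exp (-(1/500) * x ^ 2) := by gcongr
    _ = Real.exp ((x - 5) / Y * (7/2) + -(1/500) * x ^ 2) := by rw [Real.exp_add]
    _ ≤ 1 := by
      rw [Real.exp_le_one_iff]
      have : (x - 5) / Y * (7/2) ≤ (1/500) * x ^ 2 := by
        rw [div_mul_eq_mul_div, div_le_iff₀ hY0]
        have : (1/500) * x^2 * 103 ≤ (1/500) * x^2 * Y := by gcongr; linarith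
        nlinarith [sq_nonneg (x - 10)]
      linarith

lemma bounded_aux (u t : ℝ) : 3 * |u| - (1/500) * (u - t) ^ 2 ≤ 3 * |t| + 1500 := by
  have hx : |u| ≤ |t| + |u - t| := by
    have := abs_add_le (u - t) t
    rw [sub_add_cancel] at this; linarith
  rw [← sq_abs (u - t)]
  nlinarith [sq_nonneg (|u - t| - 750)]

lemma norm_gauss (z s : ℂ) : ‖Complex.exp ((1/500) * (z - s) ^ 2)‖
    = Real.exp ((1/500) * (z.re - s.re) ^ 2) * Real.exp (-(1/500) * (z.im - s.im) ^ 2) := by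
  rw [Complex.norm_exp, ← Real.exp_add]
  congr 1
  have : ((1/500) * (z - s) ^ 2 : ℂ) = ((1/500 : ℝ) : ℂ) * (z - s) ^ 2 := by push_cast; rfl
  rw [this, Complex.re_ofReal_mul, sq, Complex.mul_re]
  simp; ring

lemma convexity {q : ℕ} [NeZero q] {χ : DirichletCharacter ℂ q} (hχ : χ.IsPrimitive) {s : ℂ} {Y : ℝ}
    (h1 : -3 ≤ s.re) (h2 : s.re ≤ 2) (ht : 95 ≤ s.im) (hY : s.im + 8 ≤ Y) :
    ‖χ.LFunction s‖ ≤ (Real.pi ^ 2 / 6) * Real.exp 0.073 * (q * Y / (2 * Real.pi)) ^ (0.7 * (2 - s.re)) := by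
  obtain ⟨g, hg, hgL⟩ := exists_entire χ
  obtain ⟨K, hK0, hK⟩ := crude χ hg hgL
  have hq : (1:ℝ) ≤ q := by exact_mod_cast NeZero.pos q
  have hpi0 := Real.pi_pos
  have hpi4 := Real.pi_lt_four
  set X : ℝ := q * Y / (2 * Real.pi) with hX
  have hX1 : 1 ≤ X := by
    rw [hX, le_div_iff₀ (by positivity)]; nlinarith
  have hX0 : 0 < X := by linarith
  set f : ℂ → ℂ := fun z => g z / (z - 3) * (X : ℂ) ^ ((0.7 : ℂ) * (z - 2)) * Complex.exp ((1/500) * (z - s) ^ 2) with hf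
  have hne : ∀ z : ℂ, z.re ≤ 2 → z - 3 ≠ 0 := by
    intro z hz h
    have := congrArg Complex.re h
    simp at this; linarith
  have hnX : ∀ z : ℂ, ‖(X : ℂ) ^ ((0.7 : ℂ) * (z - 2))‖ = X ^ (0.7 * (z.re - 2)) := by
    intro z
    rw [Complex.norm_cpow_eq_rpow_re_of_pos hX0]
    congr 1
    have : ((0.7 : ℂ) * (z - 2)) = ((0.7 : ℝ) : ℂ) * (z - 2) := by push_cast; norm_num
    rw [this, Complex.re_ofReal_mul]; simp
  have hnf : ∀ z : ℂ, ‖f z‖ = ‖g z‖ / ‖z - 3‖ * X ^ (0.7 * (z.re - 2)) *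
      (Real.exp ((1/500) * (z.re - s.re) ^ 2) * Real.exp (-(1/500) * (z.im - s.im) ^ 2)) := by
    intro z
    rw [hf]; simp only [norm_mul, norm_div]
    rw [hnX, ← norm_gauss]
  have hE : ∀ z : ℂ, -3 ≤ z.re → z.re ≤ 2 → Real.exp ((1/500) * (z.re - s.re) ^ 2) ≤ Real.exp 0.05 := by
    intro z a b
    rw [Real.exp_le_exp]
    have : (z.re - s.re) ^ 2 ≤ 25 := by
      rw [show (25:ℝ) = 5 ^ 2 by norm_num]; apply sq_le_sq'; linarith; linarith
    linarith
  have hrat : ∀ z : ℂ, z.re ≤ 2 → ‖z - 1‖ ≤ ‖z - 3‖ := by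
    intro z hz
    rw [← sq_le_sq₀ (norm_nonneg _) (norm_nonneg _), ← Complex.normSq_eq_norm_sq, ← Complex.normSq_eq_norm_sq,
      Complex.normSq_apply, Complex.normSq_apply]
    simp; nlinarith
  have hgz : ∀ z : ℂ, z.re ≤ 2 → z ≠ 1 → ‖g z‖ / ‖z - 3‖ ≤ ‖χ.LFunction z‖ := by
    intro z hz hz1
    have h3 : 0 < ‖z - 3‖ := norm_pos_iff.mpr (hne z hz)
    rw [hgL z hz1, norm_mul, div_le_iff₀ h3, mul_comm]
    exact mul_le_mul_of_nonneg_left (hrat z hz) (norm_nonneg _)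
  have hdiff : DiffContOnCl ℂ f (Complex.HadamardThreeLines.verticalStrip (-3) 2) := by
    refine DifferentiableOn.diffContOnCl fun z hz => ?_
    have hz2 : z.re ≤ 2 := by
      have : closure (Complex.HadamardThreeLines.verticalStrip (-3) 2) ⊆ Complex.re ⁻¹' Icc (-3) 2 :=
        closure_minimal (preimage_mono Ioo_subset_Icc_self) (isClosed_Icc.preimage Complex.continuous_re)
      exact (this hz).2
    have hn := hne z hz2
    have hgd := hg z
    have hXne : (X : ℂ) ≠ 0 := by exact_mod_cast hX0.ne'
    refine DifferentiableAt.differentiableWithinAt ?_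
    refine ((hgd.div (by fun_prop) hn).mul ?_).mul (by fun_prop)
    exact DifferentiableAt.const_cpow (by fun_prop) (Or.inl hXne)
  have hbdd : BddAbove ((norm ∘ f) '' Complex.HadamardThreeLines.verticalClosedStrip (-3) 2) := by
    refine ⟨K * Real.exp (3 * |s.im| + 1500) * Real.exp 0.05, ?_⟩
    rintro _ ⟨z, ⟨hz1, hz2⟩, rfl⟩
    simp only [Function.comp]
    rw [hnf]
    have a1 : ‖g z‖ / ‖z - 3‖ ≤ K * Real.exp (3 * |z.im|) := by
      refine (div_le_self (norm_nonneg _) ?_).trans (hK z hz1 hz2)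
      have := Complex.abs_re_le_norm (z - 3)
      have h5 : (z - 3).re ≤ -1 := by simp; linarith
      have := neg_le_abs (z - 3).re
      linarith
    have a2 : X ^ (0.7 * (z.re - 2)) ≤ 1 := Real.rpow_le_one_of_one_le_of_nonpos hX1 (by linarith)
    have a3 := hE z hz1 hz2
    calc _ ≤ K * Real.exp (3 * |z.im|) * 1 * (Real.exp 0.05 * Real.exp (-(1/500) * (z.im - s.im) ^ 2)) := by
          gcongr
      _ = K * (Real.exp (3 * |z.im|) * Real.exp (-(1/500) * (z.im - s.im) ^ 2)) * Real.exp 0.05 := by ring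
      _ ≤ _ := by
        rw [← Real.exp_add]
        refine mul_le_mul_of_nonneg_right (mul_le_mul_of_nonneg_left (Real.exp_le_exp.mpr ?_) hK0) (Real.exp_pos _).le
        linarith [bounded_aux z.im s.im]
  set M := Real.pi ^ 2 / 6 * Real.exp 0.05 with hM
  have hM0 : 0 < M := by positivity
  have hleft : ∀ z ∈ Complex.re ⁻¹' {(-3:ℝ)}, ‖f z‖ ≤ M := by
    intro z hz
    have hz : z.re = -3 := hz
    have hzz : z = -3 + z.im * Complex.I := by apply Complex.ext <;> simp [hz]
    rw [hnf]
    have hL := left_edge hχ z.im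
    rw [← hzz] at hL
    have hz1 : z ≠ 1 := by rintro rfl; norm_num at hz
    have a1 := (hgz z (by linarith) hz1).trans hL
    have a3 := hE z (by linarith) (by linarith)
    have hr := ratio_bound (u := z.im) ht hY
    have hXe : X ^ (0.7 * (z.re - 2)) = (X ^ (7/2:ℝ))⁻¹ := by
      rw [← Real.rpow_neg hX0.le, hz]; norm_num
    rw [hXe]
    have hY0 : 0 < Y := by linarith
    have hq0 : (0:ℝ) < q := by linarith
    have e1 : (q * (|z.im| + 3) / (2 * Real.pi)) ^ (7/2:ℝ) * (X ^ (7/2:ℝ))⁻¹ = ((|z.im| + 3) / Y) ^ (7/2:ℝ) := by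
      rw [← Real.inv_rpow hX0.le, ← Real.mul_rpow (by positivity) (by positivity)]
      congr 1; rw [hX]; field_simp
    calc _ ≤ (q * (|z.im| + 3) / (2 * Real.pi)) ^ (7/2 : ℝ) * (Real.pi ^ 2 / 6) * (X ^ (7/2:ℝ))⁻¹ * (Real.exp 0.05 * Real.exp (-(1/500) * (z.im - s.im) ^ 2)) := by
          gcongr
      _ = M * (((|z.im| + 3) / Y) ^ (7/2 : ℝ) * Real.exp (-(1/500) * (z.im - s.im) ^ 2)) := by
          rw [← e1, hM]; ring
      _ ≤ M * 1 := by gcongr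
      _ = M := mul_one _
  have hright : ∀ z ∈ Complex.re ⁻¹' {(2:ℝ)}, ‖f z‖ ≤ M := by
    intro z hz
    have hz : z.re = 2 := hz
    rw [hnf]
    have hz1 : z ≠ 1 := by rintro rfl; norm_num at hz
    have a1 := (hgz z (by linarith) hz1).trans (norm_L_le χ (by linarith))
    have a3 := hE z (by linarith) (by linarith)
    have e1 : X ^ (0.7 * (z.re - 2)) = 1 := by rw [hz]; norm_num
    have e2 : Real.exp (-(1/500) * (z.im - s.im) ^ 2) ≤ 1 := Real.exp_le_one_iff.mpr (by nlinarith [sq_nonneg (z.im - s.im)])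
    rw [e1, hM]
    calc _ ≤ Real.pi ^ 2 / 6 * 1 * (Real.exp 0.05 * 1) := by gcongr
      _ = _ := by ring
  have main := Complex.HadamardThreeLines.norm_le_interp_of_mem_verticalClosedStrip' (f := f) (z := s) (by norm_num : (-3:ℝ) < 2)
    ⟨h1, h2⟩ hdiff hbdd hleft hright
  rw [← Real.rpow_add hM0] at main
  have hM1 : M ^ (1 - (s.re - -3) / (2 - -3) + (s.re - -3) / (2 - -3)) = M := by
    rw [sub_add_cancel, Real.rpow_one]
  rw [hM1, hnf] at main
  simp only [sub_self] at main
  norm_num at main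
  have hs1 : s ≠ 1 := by rintro rfl; norm_num at ht
  rw [hgL s hs1, norm_mul] at main
  have n1 : 95 ≤ ‖s - 1‖ := by
    have := Complex.abs_im_le_norm (s - 1)
    have h4 : (s - 1).im = s.im := by simp
    rw [h4] at this
    linarith [le_abs_self s.im]
  have n3 : ‖s - 3‖ ≤ ‖s - 1‖ + 2 := by
    have : s - 3 = (s - 1) - 2 := by ring
    rw [this]; refine (norm_sub_le _ _).trans ?_; simp
  have n0 : 0 < ‖s - 3‖ := norm_pos_iff.mpr (hne s h2)
  have hXs : 0 < X ^ (7 / 10 * (s.re - 2)) := Real.rpow_pos_of_pos hX0 _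
  have hXi : X ^ (0.7 * (2 - s.re)) * X ^ (7 / 10 * (s.re - 2)) = 1 := by
    rw [← Real.rpow_add hX0]; norm_num; ring_nf; simp
  have k1 : ‖χ.LFunction s‖ * X ^ (7 / 10 * (s.re - 2)) * (‖s - 1‖ / ‖s - 3‖) ≤ M := by
    calc _ = ‖s - 1‖ * ‖χ.LFunction s‖ / ‖s - 3‖ * X ^ (7 / 10 * (s.re - 2)) := by ring
      _ ≤ M := main
  have k2 : 1 ≤ (‖s - 1‖ / ‖s - 3‖) * Real.exp 0.023 := by
    have : (1:ℝ) + 0.023 ≤ Real.exp 0.023 := by linarith [Real.add_one_le_exp (0.023:ℝ)]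
    rw [div_mul_eq_mul_div, le_div_iff₀ n0]
    nlinarith
  have k3 : ‖χ.LFunction s‖ * X ^ (7 / 10 * (s.re - 2)) ≤ M * Real.exp 0.023 := by
    calc _ ≤ ‖χ.LFunction s‖ * X ^ (7 / 10 * (s.re - 2)) * ((‖s - 1‖ / ‖s - 3‖) * Real.exp 0.023) :=
          le_mul_of_one_le_right (by positivity) k2
      _ = (‖χ.LFunction s‖ * X ^ (7 / 10 * (s.re - 2)) * (‖s - 1‖ / ‖s - 3‖)) * Real.exp 0.023 := by ring
      _ ≤ _ := by gcongr
  have e5 : Real.exp 0.073 = Real.exp 0.05 * Real.exp 0.023 := by rw [← Real.exp_add]; norm_num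
  calc ‖χ.LFunction s‖ = (‖χ.LFunction s‖ * X ^ (7 / 10 * (s.re - 2))) * X ^ (0.7 * (2 - s.re)) := by
        rw [mul_assoc, mul_comm (X ^ (7/10 * _)), hXi, mul_one]
    _ ≤ (M * Real.exp 0.023) * X ^ (0.7 * (2 - s.re)) := by gcongr
    _ = _ := by rw [hM, e5]; ring

end HZ

namespace HZ

lemma jensen {f : ℂ → ℂ} {c : ℂ} {R : ℝ} (hR : 0 < R)
    (hf : AnalyticOnNhd ℂ f (Metric.closedBall c R)) (hc : f c ≠ 0)
    (Z : Finset ℂ) (hZ : ∀ z ∈ Z, f z = 0) :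
    ∑ z ∈ Z, max 0 (Real.log (R / ‖c - z‖)) ≤ Real.circleAverage (fun z => Real.log ‖f z‖) c R - Real.log ‖f c‖ := by
  have hR' : |R| = R := abs_of_pos hR
  have J := AnalyticOnNhd.circleAverage_log_norm (c := c) (R := R) (f := f) hR.ne' (by rwa [hR']) hc
  rw [hR'] at J
  rw [J, add_sub_cancel_right]
  set D := MeromorphicOn.divisor f (Metric.closedBall c R)
  have hfin : (D : ℂ → ℤ).support.Finite := D.finiteSupport (isCompact_closedBall c R)
  have hD0 : ∀ u, 0 ≤ D u := fun u => (MeromorphicOn.AnalyticOnNhd.divisor_nonneg hf) u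
  have hlog : ∀ u ∈ Metric.closedBall c R, 0 ≤ Real.log (R * ‖c - u‖⁻¹) := by
    intro u hu
    rw [mem_closedBall_iff_norm'] at hu
    rcases (norm_nonneg (c - u)).eq_or_lt with h | h
    · rw [← h]; simp
    · apply Real.log_nonneg
      rw [← div_eq_mul_inv, one_le_div h]; exact hu
  have hD1 : ∀ u ∈ Metric.closedBall c R, f u = 0 → 1 ≤ D u := by
    intro u hu hfu
    have e := MeromorphicOn.AnalyticOnNhd.divisor_apply hf hu
    have hne : analyticOrderAt f u ≠ ⊤ := by
      intro htop
      rw [analyticOrderAt_eq_top] at htop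
      have := hf.eqOn_zero_of_preconnected_of_eventuallyEq_zero (convex_closedBall c R).isPreconnected hu htop
      exact hc (this (Metric.mem_closedBall_self hR.le))
    have h0 : analyticOrderAt f u ≠ 0 := by
      rw [Ne, (hf u hu).analyticOrderAt_eq_zero]; simpa using hfu
    rw [show D u = _ from e]
    lift analyticOrderAt f u to ℕ using hne with n hn
    have : n ≠ 0 := by rintro rfl; simp at h0
    simp; omega
  have hs : (Function.support fun u => (D u : ℝ) * Real.log (R * ‖c - u‖⁻¹)) ⊆ (hfin.toFinset ∪ Z : Finset ℂ) := by
    intro u hu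
    have : D u ≠ 0 := by
      intro h; apply hu; simp [h]
    simp [this]
  rw [finsum_eq_sum_of_support_subset _ hs]
  have hterm : ∀ u, 0 ≤ (D u : ℝ) * Real.log (R * ‖c - u‖⁻¹) := by
    intro u
    by_cases hu : u ∈ Metric.closedBall c R
    · exact mul_nonneg (by exact_mod_cast hD0 u) (hlog u hu)
    · rw [D.apply_eq_zero_of_notMem hu]; simp
  calc ∑ z ∈ Z, max 0 (Real.log (R / ‖c - z‖)) ≤ ∑ z ∈ Z, (D z : ℝ) * Real.log (R * ‖c - z‖⁻¹) := by
        refine Finset.sum_le_sum fun z hz => ?_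
        refine max_le (hterm z) ?_
        by_cases hu : z ∈ Metric.closedBall c R
        · rw [div_eq_mul_inv]
          have : (1:ℝ) ≤ D z := by exact_mod_cast hD1 z hu (hZ z hz)
          exact le_mul_of_one_le_left (hlog z hu) this
        · refine le_trans ?_ (hterm z)
          rw [mem_closedBall_iff_norm', not_le] at hu
          exact Real.log_nonpos (by positivity) ((div_le_one (by linarith)).mpr hu.le)
    _ ≤ _ := Finset.sum_le_sum_of_subset_of_nonneg Finset.subset_union_right fun u _ _ => hterm u

lemma int_max_sin : ∫ x in (0:ℝ)..(2 * Real.pi), max 0 (Real.sin x) = 2 := by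
  have hpi := Real.pi_pos
  have hc : Continuous fun x : ℝ => max 0 (Real.sin x) := by fun_prop
  rw [← intervalIntegral.integral_add_adjacent_intervals (b := Real.pi) (hc.intervalIntegrable _ _) (hc.intervalIntegrable _ _)]
  have h1 : ∫ x in (0:ℝ)..Real.pi, max 0 (Real.sin x) = ∫ x in (0:ℝ)..Real.pi, Real.sin x := by
    refine intervalIntegral.integral_congr fun x hx => ?_
    rw [uIcc_of_le hpi.le] at hx
    exact max_eq_right (Real.sin_nonneg_of_mem_Icc hx)
  have h2 : ∫ x in Real.pi..(2 * Real.pi), max 0 (Real.sin x) = ∫ x in Real.pi..(2 * Real.pi), (0:ℝ) := by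
    refine intervalIntegral.integral_congr fun x hx => ?_
    rw [uIcc_of_le (by linarith)] at hx
    refine max_eq_left ?_
    have := Real.sin_nonneg_of_mem_Icc (x := x - Real.pi) ⟨by linarith [hx.1], by linarith [hx.2]⟩
    rw [Real.sin_sub_pi] at this; linarith
  rw [h1, h2]; simp; norm_num

lemma circ_avg (c : ℂ) : Real.circleAverage (fun z => max 0 (c.re - z.re)) c 5 = 5 / Real.pi := by
  rw [Real.circleAverage_eq_integral_add (η := Real.pi / 2)]
  have : ∀ x : ℝ, max 0 (c.re - (circleMap c 5 (x + Real.pi/2)).re) = 5 * max 0 (Real.sin x) := by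
    intro x
    rw [mul_max_of_nonneg _ _ (by norm_num : (0:ℝ) ≤ 5), mul_zero]
    congr 1
    have h : circleMap c 5 (x + Real.pi/2) = c + circleMap 0 5 (x + Real.pi/2) := by simp [circleMap]
    rw [h, Complex.add_re, circleMap_zero_re, Real.cos_add_pi_div_two]
    ring
  simp only [this]
  rw [intervalIntegral.integral_const_mul, int_max_sin]
  simp; field_simp; 

lemma J_bound {q : ℕ} [NeZero q] {χ : DirichletCharacter ℂ q} (hχ : χ.IsPrimitive) {t : ℝ} (ht : 100 ≤ t)
    (Z : Finset ℂ) (hZ : ∀ z ∈ Z, χ.LFunction z = 0) :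
    ∑ z ∈ Z, max 0 (Real.log (5 / ‖(2 + t * Complex.I) - z‖)) ≤
      3.5 / Real.pi * Real.log (q * (t + 13) / (2 * Real.pi)) + (2 * Real.log (Real.pi ^ 2 / 6) + 0.073) := by
  set c : ℂ := 2 + t * Complex.I with hcd
  have hre : c.re = 2 := by simp [hcd]
  have him : c.im = t := by simp [hcd]
  have hq : (1:ℝ) ≤ q := by exact_mod_cast NeZero.pos q
  have hpi0 := Real.pi_pos
  have hpi4 := Real.pi_lt_four
  have hpi3 := Real.pi_gt_three
  set X : ℝ := q * (t + 13) / (2 * Real.pi) with hX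
  have hX1 : 1 ≤ X := by
    rw [hX, le_div_iff₀ (by positivity)]; nlinarith
  have hX0 : 0 < X := by linarith
  have hlX : 0 ≤ Real.log X := Real.log_nonneg hX1
  have hP : 1 ≤ Real.pi ^ 2 / 6 := by nlinarith
  have hlP : 0 ≤ Real.log (Real.pi ^ 2 / 6) := Real.log_nonneg hP
  have hball : ∀ z ∈ Metric.closedBall c 5, t - 5 ≤ z.im ∧ z.im ≤ t + 5 ∧ -3 ≤ z.re := by
    intro z hz
    rw [mem_closedBall_iff_norm] at hz
    have h1 := (Complex.abs_im_le_norm (z - c)).trans hz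
    have h2 := (Complex.abs_re_le_norm (z - c)).trans hz
    rw [Complex.sub_im, him, abs_le] at h1
    rw [Complex.sub_re, hre, abs_le] at h2
    exact ⟨by linarith [h1.1], by linarith [h1.2], by linarith [h2.1]⟩
  have hne1 : ∀ z ∈ Metric.closedBall c 5, z ≠ 1 := by
    rintro z hz rfl
    have := (hball 1 hz).1
    simp at this; linarith
  have hdiff : DifferentiableOn ℂ χ.LFunction {1}ᶜ := fun z hz =>
    (DirichletCharacter.differentiableAt_LFunction χ z (Or.inl hz)).differentiableWithinAt
  have han : AnalyticOnNhd ℂ χ.LFunction (Metric.closedBall c 5) := fun z hz =>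
    hdiff.analyticAt (isOpen_compl_singleton.mem_nhds (hne1 z hz))
  have hge := norm_L_ge χ (s := c) (by rw [hre])
  have hc0 : χ.LFunction c ≠ 0 := by
    intro h; rw [h] at hge; simp at hge; linarith
  refine (jensen (by norm_num) han hc0 Z hZ).trans ?_
  have h1 : -Real.log ‖χ.LFunction c‖ ≤ Real.log (Real.pi ^ 2 / 6) := by
    have := Real.log_nonneg hge
    rw [Real.log_mul (norm_ne_zero_iff.mpr hc0) (by positivity)] at this
    linarith
  have hcont : Continuous fun z : ℂ => Real.log (Real.pi ^ 2 / 6) + 0.073 + 0.7 * Real.log X * max 0 (c.re - z.re) := by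
    fun_prop
  have h2 : Real.circleAverage (fun z => Real.log ‖χ.LFunction z‖) c 5 ≤
      Real.circleAverage (fun z : ℂ => Real.log (Real.pi ^ 2 / 6) + 0.073 + 0.7 * Real.log X * max 0 (c.re - z.re)) c 5 := by
    refine Real.circleAverage_mono ?_ hcont.continuousOn.circleIntegrable' ?_
    · refine MeromorphicOn.circleIntegrable_log_norm (AnalyticOnNhd.meromorphicOn (han.mono ?_))
      rw [abs_of_pos (by norm_num : (0:ℝ) < 5)]; exact Metric.sphere_subset_closedBall
    · intro z hz
      rw [abs_of_pos (by norm_num : (0:ℝ) < 5)] at hz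
      have hz' := hball z (Metric.sphere_subset_closedBall hz)
      have hm0 : 0 ≤ 0.7 * Real.log X * max 0 (c.re - z.re) := by positivity
      by_cases h0 : χ.LFunction z = 0
      · rw [h0]; simp only [norm_zero, Real.log_zero]; linarith
      have hn0 : 0 < ‖χ.LFunction z‖ := norm_pos_iff.mpr h0
      by_cases hz2 : z.re ≤ 2
      · have hcv := convexity hχ (Y := t + 13) hz'.2.2 hz2 (by linarith [hz'.1]) (by linarith [hz'.2.1])
        rw [← hX] at hcv
        have := Real.log_le_log hn0 hcv
        rw [Real.log_mul (by positivity) (by positivity), Real.log_mul (by positivity) (by positivity),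
          Real.log_exp, Real.log_rpow hX0] at this
        have hmx : max 0 (c.re - z.re) = 2 - z.re := by rw [hre]; exact max_eq_right (by linarith)
        rw [hmx]; linarith
      · have := Real.log_le_log hn0 (norm_L_le χ (s := z) (by linarith))
        linarith
  have h3 : Real.circleAverage (fun z : ℂ => Real.log (Real.pi ^ 2 / 6) + 0.073 + 0.7 * Real.log X * max 0 (c.re - z.re)) c 5
      = Real.log (Real.pi ^ 2 / 6) + 0.073 + 0.7 * Real.log X * (5 / Real.pi) := by
    rw [Real.circleAverage_fun_add (f₁ := fun _ => Real.log (Real.pi ^ 2 / 6) + 0.073) continuousOn_const.circleIntegrable' (by apply ContinuousOn.circleIntegrable'; fun_prop),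
      Real.circleAverage_const]
    simp_rw [← smul_eq_mul (a := 0.7 * Real.log X)]
    rw [Real.circleAverage_fun_smul, circ_avg]
  have h4 : 0.7 * Real.log X * (5 / Real.pi) = 3.5 / Real.pi * Real.log X := by ring
  linarith

end HZ

namespace HZ
open ComplexConjugate

lemma inv_primitive {q : ℕ} {χ : DirichletCharacter ℂ q} (hχ : χ.IsPrimitive) : χ⁻¹.IsPrimitive := by
  rw [DirichletCharacter.isPrimitive_def] at *
  rw [DirichletCharacter.conductor_inv, hχ]

lemma LSeries_conj' (f : ℕ → ℂ) (s : ℂ) : conj (LSeries f (conj s)) = LSeries (fun n => conj (f n)) s := by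
  rw [LSeries, LSeries, Complex.conj_tsum]
  congr 1; ext n
  rcases eq_or_ne n 0 with rfl | hn
  · simp
  · rw [LSeries.term_of_ne_zero hn, LSeries.term_of_ne_zero hn, map_div₀]
    congr 1
    rw [Complex.cpow_conj]
    · simp
    · rw [Complex.natCast_arg]; exact Real.pi_pos.ne

lemma LFunction_conj {q : ℕ} [NeZero q] (χ : DirichletCharacter ℂ q) {s : ℂ} (hs : s ≠ 1) :
    χ⁻¹.LFunction s = conj (χ.LFunction (conj s)) := by
  obtain ⟨g, hg, hgL⟩ := exists_entire χ
  obtain ⟨h, hh, hhL⟩ := exists_entire χ⁻¹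
  have hg' : Differentiable ℂ (fun z => conj (g (conj z))) := by
    intro z
    have := (hg (conj z)).conj_conj
    rw [Complex.conj_conj] at this
    exact this
  have key : h = fun z => conj (g (conj z)) := by
    refine AnalyticOnNhd.eq_of_eventuallyEq (z₀ := 2) (fun z _ => hh.analyticAt z) (fun z _ => hg'.analyticAt z) ?_
    have : {z : ℂ | 1 < z.re} ∈ nhds (2:ℂ) := (isOpen_lt continuous_const Complex.continuous_re).mem_nhds (by simp)
    filter_upwards [this] with z hz
    have hz : 1 < z.re := hz
    have hz1 : z ≠ 1 := by rintro rfl; simp at hz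
    have hz1' : conj z ≠ 1 := by
      intro h; apply hz1; rw [← Complex.conj_conj z, h]; simp
    rw [hhL z hz1, hgL _ hz1', DirichletCharacter.LFunction_eq_LSeries _ hz,
      DirichletCharacter.LFunction_eq_LSeries _ (by simpa using hz), map_mul, LSeries_conj']
    simp only [map_sub, Complex.conj_conj, map_one]
    congr 3; ext n
    rw [← MulChar.star_eq_inv]; rfl
  have hs' : conj s ≠ 1 := by
    intro h; apply hs; rw [← Complex.conj_conj s, h]; simp
  have := congrFun key s
  rw [hhL s hs, hgL _ hs', map_mul] at this
  simp only [map_sub, Complex.conj_conj, map_one] at this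
  exact mul_left_cancel₀ (sub_ne_zero.mpr hs) this

lemma gammaFactor_ne {q : ℕ} (χ : DirichletCharacter ℂ q) {s : ℂ} (hs : 0 < s.re) : χ.gammaFactor s ≠ 0 := by
  rcases χ.even_or_odd with h | h <;> rw [h.gammaFactor_def]
  · exact Complex.Gammaℝ_ne_zero_of_re_pos hs
  · exact Complex.Gammaℝ_ne_zero_of_re_pos (by simp; linarith)

lemma zero_reflect {q : ℕ} [NeZero q] {χ : DirichletCharacter ℂ q} (hχ : χ.IsPrimitive) {ρ : ℂ}
    (h : χ.LFunction ρ = 0) (h0 : 0 < ρ.re) (h1 : ρ.re < 1) : χ.LFunction (1 - conj ρ) = 0 := by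
  have hne : ∀ {z : ℂ}, 0 < z.re → z ≠ 0 := by rintro z hz rfl; simp at hz
  have hc1 : conj ρ ≠ 1 := by
    intro h; have := congrArg Complex.re h; simp at this; linarith
  have a := LFunction_conj χ hc1
  rw [Complex.conj_conj, h, map_zero] at a
  have hr : 0 < (conj ρ).re := by simpa using h0
  rw [DirichletCharacter.LFunction_eq_completed_div_gammaFactor _ _ (Or.inl (hne hr)),
    div_eq_zero_iff, or_iff_left (gammaFactor_ne _ hr)] at a
  rw [DirichletCharacter.LFunction_eq_completed_div_gammaFactor _ _ (Or.inl (hne (by simpa using h1))),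
    DirichletCharacter.IsPrimitive.completedLFunction_one_sub hχ, a]
  simp

end HZ

namespace HZ

lemma exp_ub {x : ℝ} (h0 : 0 ≤ x) (h1 : x ≤ 1) :
    Real.exp x ≤ 1 + x + x^2/2 + x^3/6 + x^4/24 + x^5/120 + x^6/720 + x^7 * 8 / 35280 := by
  have := Real.exp_bound' h0 h1 (n := 7) (by norm_num)
  simp only [Finset.sum_range_succ, Finset.sum_range_zero] at this
  norm_num [Nat.factorial] at this
  linarith

lemma exp_lb {x : ℝ} (h0 : 0 ≤ x) :
    1 + x + x^2/2 + x^3/6 + x^4/24 + x^5/120 + x^6/720 + x^7/5040 ≤ Real.exp x := by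
  have := Real.sum_le_exp_of_nonneg h0 8
  simp only [Finset.sum_range_succ, Finset.sum_range_zero] at this
  norm_num [Nat.factorial] at this
  linarith

/-- `c` with `4c ∈ [0,4]`. -/
lemma log_ge {x c : ℝ} (h0 : 0 ≤ c) (h1 : c ≤ 1)
    (h : (1 + c + c^2/2 + c^3/6 + c^4/24 + c^5/120 + c^6/720 + c^7 * 8 / 35280)^4 ≤ x) : 4 * c ≤ Real.log x := by
  have e := exp_ub h0 h1
  have hx : 0 < x := lt_of_lt_of_le (by positivity) h
  rw [Real.le_log_iff_exp_le hx, show 4 * c = c * (4:ℕ) by push_cast; ring, Real.exp_mul, Real.rpow_natCast]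
  refine le_trans ?_ h
  gcongr

lemma log_le {x c : ℝ} (h0 : 0 ≤ c) (hx : 0 < x)
    (h : x ≤ (1 + c + c^2/2 + c^3/6 + c^4/24 + c^5/120 + c^6/720 + c^7/5040)^4) : Real.log x ≤ 4 * c := by
  have e := exp_lb h0
  rw [Real.log_le_iff_le_exp hx, show 4 * c = c * (4:ℕ) by push_cast; ring, Real.exp_mul, Real.rpow_natCast]
  refine le_trans h ?_
  gcongr

noncomputable def U (y : ℝ) : ℝ := Real.log (25 / (2.5 + y^2)) / 2

lemma U_tan {y y0 : ℝ} : U y0 + (y0^2 - y^2) / (2 * (2.5 + y0^2)) ≤ U y := by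
  unfold U
  have h0 : 0 < 2.5 + y0^2 := by positivity
  have h1 : 0 < 2.5 + y^2 := by positivity
  rw [Real.log_div (by norm_num) h0.ne', Real.log_div (by norm_num) h1.ne']
  have := Real.log_le_sub_one_of_pos (div_pos h1 h0)
  rw [Real.log_div h1.ne' h0.ne'] at this
  have e : (y0^2 - y^2) / (2 * (2.5 + y0^2)) = - ((2.5 + y^2) / (2.5 + y0^2) - 1) / 2 := by
    field_simp; ring
  rw [e]; linarith

lemma U_nonneg {y : ℝ} (h0 : 0 ≤ y) (h1 : y ≤ 4.5) : 0 ≤ U y := by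
  unfold U
  have : 0 ≤ Real.log (25 / (2.5 + y^2)) := by
    apply Real.log_nonneg
    rw [one_le_div (by positivity)]; nlinarith
  linarith

lemma U_anti {y z : ℝ} (h0 : 0 ≤ y) (h1 : y ≤ z) : U z ≤ U y := by
  unfold U
  have : Real.log (25 / (2.5 + z^2)) ≤ Real.log (25 / (2.5 + y^2)) := by
    apply Real.log_le_log (by positivity)
    gcongr
  linarith

lemma U_sum {y : ℝ} (h0 : 0 ≤ y) (h1 : y ≤ 4.5) : 1.19 ≤ U y + U (4.5 - y) := by
  unfold U
  have e : Real.log (25 / (2.5 + y^2)) / 2 + Real.log (25 / (2.5 + (4.5 - y)^2)) / 2 =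
    Real.log (25 / (2.5 + y^2) * (25 / (2.5 + (4.5 - y)^2))) / 2 := by
      rw [Real.log_mul (by positivity) (by positivity)]; ring
  have hp : (2.5 + y^2) * (2.5 + (4.5 - y)^2) ≤ 57.2 := by
    have hd : (y - 2.25)^2 ≤ 5.0625 := by nlinarith
    nlinarith [mul_nonneg (sq_nonneg (y - 2.25)) (by linarith : 0 ≤ 5.0625 - (y-2.25)^2)]
  have h2 : 4 * 0.595 ≤ Real.log (25 / (2.5 + y^2) * (25 / (2.5 + (4.5 - y)^2))) := by
    apply log_ge (by norm_num) (by norm_num)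
    have : (625:ℝ) / 57.2 ≤ 25 / (2.5 + y^2) * (25 / (2.5 + (4.5 - y)^2)) := by
      rw [div_mul_div_comm]
      rw [show (25:ℝ) * 25 = 625 by norm_num]
      exact div_le_div_of_nonneg_left (by norm_num) (by positivity) hp
    refine le_trans ?_ this
    norm_num
  rw [e]; linarith

lemma U0 : 1.15 ≤ U 0 := by
  have := log_ge (x := 25 / (2.5 + 0^2)) (c := 0.575) (by norm_num) (by norm_num) (by norm_num)
  unfold U; linarith
lemma U2 : 0.672 ≤ U 2 := by
  have := log_ge (x := 25 / (2.5 + 2^2)) (c := 0.336) (by norm_num) (by norm_num) (by norm_num)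
  unfold U; linarith
lemma U25 : 0.524 ≤ U 2.5 := by
  have := log_ge (x := 25 / (2.5 + 2.5^2)) (c := 0.262) (by norm_num) (by norm_num) (by norm_num)
  unfold U; linarith
lemma U3 : 0.388 ≤ U 3 := by
  have := log_ge (x := 25 / (2.5 + 3^2)) (c := 0.194) (by norm_num) (by norm_num) (by norm_num)
  unfold U; linarith
lemma U15 : 0.83 ≤ U 1.5 := by
  have := log_ge (x := 25 / (2.5 + 1.5^2)) (c := 0.415) (by norm_num) (by norm_num) (by norm_num)
  unfold U; linarith
lemma U4 : 0.15 ≤ U 4 := by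
  have := log_ge (x := 25 / (2.5 + 4^2)) (c := 0.075) (by norm_num) (by norm_num) (by norm_num)
  unfold U; linarith
lemma U05 : 1.102 ≤ U 0.5 := by
  have := log_ge (x := 25 / (2.5 + 0.5^2)) (c := 0.551) (by norm_num) (by norm_num) (by norm_num)
  unfold U; linarith
lemma U44 : U 4.4 ≤ 0.068 := by
  have := log_le (x := 25 / (2.5 + 4.4^2)) (c := 0.034) (by norm_num) (by norm_num) (by norm_num)
  unfold U; linarith
lemma U35 : U 3.5 ≤ 0.265 := by
  have := log_le (x := 25 / (2.5 + 3.5^2)) (c := 0.1325) (by norm_num) (by norm_num) (by norm_num)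
  unfold U; linarith

lemma cover_max {y : ℝ} (h0 : 0 ≤ y) (h1 : y ≤ 4.5) :
    1.11 ≤ (1 + 0.2823 * y) * U y + (1 - 0.2823 * (4.5 - y)) * U (4.5 - y) := by
  have ha : 0 ≤ 1 + 0.2823 * y := by positivity
  have hUn := U_nonneg (y := 4.5 - y) (by linarith) (by linarith)
  by_cases hb : 0 ≤ 1 - 0.2823 * (4.5 - y)
  · have hy : 0.957 ≤ y := by linarith
    have gen : ∀ {y0 c d : ℝ}, c ≤ U y0 → d ≤ U (4.5 - y0) →
      (1 + 0.2823 * y) * (c + (y0^2 - y^2) / (2 * (2.5 + y0^2))) +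
       (1 - 0.2823 * (4.5 - y)) * (d + ((4.5 - y0)^2 - (4.5 - y)^2) / (2 * (2.5 + (4.5 - y0)^2)))
        ≤ (1 + 0.2823 * y) * U y + (1 - 0.2823 * (4.5 - y)) * U (4.5 - y) := by
      intro y0 c d hc hd
      have t1 := U_tan (y := y) (y0 := y0)
      have t2 := U_tan (y := 4.5 - y) (y0 := 4.5 - y0)
      have := mul_le_mul_of_nonneg_left (show c + (y0^2 - y^2) / (2 * (2.5 + y0^2)) ≤ U y by linarith) ha
      have := mul_le_mul_of_nonneg_left (show d + ((4.5 - y0)^2 - (4.5 - y)^2) / (2 * (2.5 + (4.5 - y0)^2)) ≤ U (4.5 - y) by linarith) hb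
      linarith
    have bern : ∀ {l r : ℝ}, l ≤ y → y ≤ r → 0 ≤ (y-l)^3 ∧ 0 ≤ (y-l)^2*(r-y) ∧ 0 ≤ (y-l)*(r-y)^2 ∧ 0 ≤ (r-y)^3 := by
      intro l r hl hr
      have := sub_nonneg.2 hl
      have := sub_nonneg.2 hr
      refine ⟨?_, ?_, ?_, ?_⟩ <;> positivity
    rcases le_total y 2.5 with h | h
    · refine le_trans ?_ (gen (y0 := 2) U2 (d := 0.524) (by rw [show (4.5:ℝ) - 2 = 2.5 by norm_num]; exact U25))
      obtain ⟨b1, b2, b3, b4⟩ := bern hy h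
      norm_num at b1 b2 b3 b4 ⊢
      nlinarith [b1, b2, b3, b4]
    · rcases le_total y 3.8 with h' | h'
      · refine le_trans ?_ (gen (y0 := 3) U3 (d := 0.83) (by rw [show (4.5:ℝ) - 3 = 1.5 by norm_num]; exact U15))
        obtain ⟨b1, b2, b3, b4⟩ := bern h h'
        norm_num at b1 b2 b3 b4 ⊢
        nlinarith [b1, b2, b3, b4]
      · refine le_trans ?_ (gen (y0 := 4) U4 (d := 1.102) (by rw [show (4.5:ℝ) - 4 = 0.5 by norm_num]; exact U05))
        obtain ⟨b1, b2, b3, b4⟩ := bern h' h1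
        norm_num at b1 b2 b3 b4 ⊢
        nlinarith [b1, b2, b3, b4]
  · push Not at hb
    have hy : y ≤ 0.96 := by linarith
    have t1 := U_tan (y := y) (y0 := 0)
    have u0 := U0
    have k1 := mul_le_mul_of_nonneg_left (show 1.15 - y^2 / 5 ≤ U y by norm_num at t1; linarith) ha
    rcases le_total y 0.1 with h | h
    · have := (U_anti (y := 4.4) (z := 4.5 - y) (by norm_num) (by linarith)).trans U44
      have k2 : -(0.271 * 0.068) ≤ (1 - 0.2823 * (4.5 - y)) * U (4.5 - y) := by nlinarith
      nlinarith [mul_nonneg h0 h0]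
    · have := (U_anti (y := 3.5) (z := 4.5 - y) (by norm_num) (by linarith)).trans U35
      have k2 : -(0.2422 * 0.265) ≤ (1 - 0.2823 * (4.5 - y)) * U (4.5 - y) := by nlinarith
      nlinarith [mul_nonneg (sub_nonneg.2 h) (sub_nonneg.2 hy), mul_nonneg (mul_nonneg (sub_nonneg.2 h) (sub_nonneg.2 hy)) h0]

lemma cover {y θ : ℝ} (h0 : 0 ≤ y) (h1 : y ≤ 4.5) (ht0 : 0 ≤ θ) (ht1 : θ ≤ 0.2823) :
    1.11 ≤ Real.exp (θ * y) * U y + Real.exp (-θ * (4.5 - y)) * U (4.5 - y) := by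
  have u1 := U_nonneg h0 h1
  have u2 := U_nonneg (y := 4.5 - y) (by linarith) (by linarith)
  have e1 := mul_le_mul_of_nonneg_right (Real.add_one_le_exp (θ * y)) u1
  have e2 := mul_le_mul_of_nonneg_right (Real.add_one_le_exp (-θ * (4.5 - y))) u2
  have a := U_sum h0 h1
  have b := cover_max h0 h1
  -- linear in θ
  have h3 : 0.2823 * ((θ * y + 1) * U y + (-θ * (4.5 - y) + 1) * U (4.5 - y)) =
    (0.2823 - θ) * (U y + U (4.5 - y)) + θ * ((1 + 0.2823 * y) * U y + (1 - 0.2823 * (4.5 - y)) * U (4.5 - y)) := by ring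
  have h4 := mul_le_mul_of_nonneg_left a (sub_nonneg.2 ht1)
  have h5 := mul_le_mul_of_nonneg_left b ht0
  linarith

end HZ

namespace HZ
open ComplexConjugate

lemma exp_lt1 {x : ℝ} (h : x < 0) : Real.exp x < 1 := by
  rw [← Real.exp_zero]; exact Real.exp_lt_exp.2 h

lemma pade {x : ℝ} (h0 : 0 < x) : 1 / (1 - Real.exp (-x)) ≤ 1 / x + 1 / 2 + x / 12 := by
  have h1 : 0 < 1 - Real.exp (-x) := by
    have := HZ.exp_lt1 (x := -x) (by linarith); linarith
  have hT := Real.sum_le_exp_of_nonneg h0.le 6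
  simp [Finset.sum_range_succ, Nat.factorial] at hT
  have hE := Real.exp_pos x
  have hQ : 0 < 12 - 6 * x + x ^ 2 := by nlinarith [sq_nonneg (x - 3)]
  have h2 : 12 + 6 * x + x ^ 2 ≤ (12 - 6 * x + x ^ 2) * Real.exp x := by
    have := mul_le_mul_of_nonneg_left hT hQ.le
    have h5 : 0 ≤ x ^ 5 * (2 - x + x ^ 2) :=
      mul_nonneg (by positivity) (by nlinarith [sq_nonneg (x - 1 / 2)])
    nlinarith
  have h3 : (12 + 6 * x + x ^ 2) * Real.exp (-x) ≤ 12 - 6 * x + x ^ 2 := by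
    rw [Real.exp_neg, ← div_eq_mul_inv, div_le_iff₀ hE]; exact h2
  rw [div_le_iff₀ h1]
  have : (1 / x + 1 / 2 + x / 12) = (12 + 6 * x + x ^ 2) / (12 * x) := by field_simp; ring
  rw [this, div_mul_eq_mul_div, le_div_iff₀ (by positivity)]
  nlinarith

lemma geo2 {x : ℝ} (h0 : 0 < x) : Real.exp (-x) / (1 - Real.exp (-x)) ^ 2 ≤ 1 / x ^ 2 := by
  have h1 : 0 < 1 - Real.exp (-x) := by
    have := HZ.exp_lt1 (x := -x) (by linarith); linarith
  rw [div_le_div_iff₀ (by positivity) (by positivity), one_mul]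
  have hs : x / 2 ≤ Real.sinh (x / 2) := Real.self_le_sinh_iff.2 (by linarith)
  rw [Real.sinh_eq] at hs
  have e1 : Real.exp (-x) = Real.exp (-(x / 2)) ^ 2 := by
    rw [← Real.exp_nat_mul]; congr 1; push_cast; ring
  have e2 : Real.exp (x / 2) * Real.exp (-(x / 2)) = 1 := by
    rw [← Real.exp_add]; simp
  have hp := Real.exp_pos (-(x / 2))
  have h3 : x * Real.exp (-(x / 2)) ≤ 1 - Real.exp (-x) := by
    rw [e1]; nlinarith [mul_le_mul_of_nonneg_right hs hp.le]
  calc _ = (x * Real.exp (-(x / 2))) ^ 2 := by rw [mul_pow, e1]; ring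
    _ ≤ _ := by
      apply pow_le_pow_left₀ _ h3
      positivity

lemma U_even (y : ℝ) : U (-y) = U y := by simp [U]

lemma sym_log {z : ℂ} {a : ℝ} (h0 : 0 < z.re) (h1 : z.re < 1) :
    2 * max 0 (U (z.im - a)) ≤ max 0 (Real.log (5 / ‖(2 + a * Complex.I) - z‖)) +
      max 0 (Real.log (5 / ‖(2 + a * Complex.I) - (1 - conj z)‖)) := by
  rcases le_or_gt (U (z.im - a)) 0 with h | h
  · rw [max_eq_left h]; simp only [mul_zero]; positivity
  rw [max_eq_right h.le]
  refine le_trans ?_ (add_le_add (le_max_right _ _) (le_max_right _ _))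
  set p := ‖(2 + a * Complex.I) - z‖ with hp
  set r := ‖(2 + a * Complex.I) - (1 - conj z)‖ with hr
  have p2 : p ^ 2 = (2 - z.re) ^ 2 + (z.im - a) ^ 2 := by
    rw [hp, Complex.sq_norm, Complex.normSq_apply]; simp; ring
  have r2 : r ^ 2 = (1 + z.re) ^ 2 + (z.im - a) ^ 2 := by
    rw [hr, Complex.sq_norm, Complex.normSq_apply]; simp; ring
  have pp : 0 < p := by
    have : 0 < p ^ 2 := by rw [p2]; nlinarith [sq_nonneg (z.im - a)]
    exact lt_of_le_of_ne (norm_nonneg _) (fun h => by rw [← h] at this; norm_num at this)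
  have rp : 0 < r := by
    have : 0 < r ^ 2 := by rw [r2]; nlinarith [sq_nonneg (z.im - a)]
    exact lt_of_le_of_ne (norm_nonneg _) (fun h => by rw [← h] at this; norm_num at this)
  have hm : p * r ≤ 2.5 + (z.im - a) ^ 2 := by
    nlinarith [sq_nonneg (p - r), mul_pos h0 (sub_pos.2 h1)]
  rw [← Real.log_mul (by positivity) (by positivity), U]
  have : 2 * (Real.log (25 / (2.5 + (z.im - a) ^ 2)) / 2) = Real.log (25 / (2.5 + (z.im - a) ^ 2)) := by ring
  rw [this]
  apply Real.log_le_log (by positivity)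
  rw [div_mul_div_comm]
  norm_num at *
  gcongr

variable {q : ℕ} [NeZero q] {χ : DirichletCharacter ℂ q}

lemma inv_sum (Z : Finset ℂ) (hr : ∀ z ∈ Z, 1 - conj z ∈ Z) (f : ℂ → ℝ) :
    ∑ z ∈ Z, f (1 - conj z) = ∑ z ∈ Z, f z := by
  refine Finset.sum_bij' (fun z _ => 1 - conj z) (fun z _ => 1 - conj z) hr hr ?_ ?_ ?_ <;> simp

lemma JU (hχ : χ.IsPrimitive) {t : ℝ} (ht : 100 ≤ t) (Z : Finset ℂ)
    (hZ : ∀ z ∈ Z, χ.LFunction z = 0 ∧ 0 < z.re ∧ z.re < 1) (hr : ∀ z ∈ Z, 1 - conj z ∈ Z) :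
    ∑ z ∈ Z, max 0 (U (z.im - t)) ≤ 3.5 / Real.pi * Real.log (q * (t + 13) / (2 * Real.pi))
      + (2 * Real.log (Real.pi ^ 2 / 6) + 0.073) := by
  refine le_trans ?_ (J_bound hχ ht Z (fun z hz => (hZ z hz).1))
  have h1 := Finset.sum_le_sum (fun z hz => sym_log (z := z) (a := t) (hZ z hz).2.1 (hZ z hz).2.2)
  rw [Finset.sum_add_distrib, inv_sum Z hr (fun w => max 0 (Real.log (5 / ‖(2 + t * Complex.I) - w‖))),
    ← Finset.mul_sum] at h1
  linarith

lemma one_z {z : ℂ} {T θ : ℝ} (hz : T < z.im) (h0 : 0 ≤ θ) (h1 : θ ≤ 0.2823) {N : ℕ}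
    (hN : ⌊(z.im - T) / 4.5⌋₊ + 1 < N) :
    1.11 * Real.exp (-θ * (z.im - T)) ≤
      ∑ k ∈ Finset.range N, Real.exp (-(4.5 * θ)) ^ k * max 0 (U (z.im - (T + 4.5 * k))) := by
  set k := ⌊(z.im - T) / 4.5⌋₊ with hk
  have hd : 0 ≤ (z.im - T) / 4.5 := by apply div_nonneg <;> [linarith; norm_num]
  have a1 := Nat.floor_le hd
  have a2 := Nat.lt_floor_add_one ((z.im - T) / 4.5)
  rw [← hk] at a1 a2
  rw [le_div_iff₀ (by norm_num)] at a1
  rw [div_lt_iff₀ (by norm_num)] at a2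
  set y := z.im - T - 4.5 * k with hy
  have hc := cover (y := y) (θ := θ) (by linarith) (by linarith) h0 h1
  have hsub : ({k, k + 1} : Finset ℕ) ⊆ Finset.range N := by
    intro j hj; simp at hj ⊢; omega
  refine le_trans ?_ (Finset.sum_le_sum_of_subset_of_nonneg hsub (fun i _ _ => by positivity))
  rw [Finset.sum_pair (by omega)]
  have e1 : Real.exp (-(4.5 * θ)) ^ k = Real.exp (-θ * (z.im - T)) * Real.exp (θ * y) := by
    rw [← Real.exp_nat_mul, ← Real.exp_add]; congr 1; rw [hy]; ring
  have e2 : Real.exp (-(4.5 * θ)) ^ (k + 1) = Real.exp (-θ * (z.im - T)) * Real.exp (-θ * (4.5 - y)) := by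
    rw [← Real.exp_nat_mul, ← Real.exp_add]; congr 1; rw [hy]; push_cast; ring
  have e3 : z.im - (T + 4.5 * k) = y := by rw [hy]; ring
  have e4 : z.im - (T + 4.5 * ((k + 1 : ℕ) : ℝ)) = -(4.5 - y) := by rw [hy]; push_cast; ring
  rw [e1, e2, e3, e4, U_even]
  have m1 := le_max_right 0 (U y)
  have m2 := le_max_right 0 (U (4.5 - y))
  calc _ ≤ Real.exp (-θ * (z.im - T)) * (Real.exp (θ * y) * U y + Real.exp (-θ * (4.5 - y)) * U (4.5 - y)) := by
        rw [mul_comm]; gcongr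
    _ ≤ Real.exp (-θ * (z.im - T)) * (Real.exp (θ * y) * max 0 (U y) + Real.exp (-θ * (4.5 - y)) * max 0 (U (4.5 - y))) := by gcongr
    _ = _ := by ring

lemma geo_fin {w : ℝ} (h0 : 0 ≤ w) (h1 : w < 1) {a b : ℝ} (ha : 0 ≤ a) (hb : 0 ≤ b) (N : ℕ) :
    ∑ k ∈ Finset.range N, w ^ k * (a + b * k) ≤ a * (1 / (1 - w)) + b * (w / (1 - w) ^ 2) := by
  have hn : ‖w‖ < 1 := by rw [Real.norm_of_nonneg h0]; exact h1
  have s1 := (hasSum_geometric_of_lt_one h0 h1).mul_left a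
  have s2 := (hasSum_coe_mul_geometric_of_norm_lt_one hn).mul_left b
  have s := s1.add s2
  rw [one_div]
  refine le_trans (le_of_eq ?_) (sum_le_hasSum (Finset.range N) (fun k _ => by positivity) s)
  apply Finset.sum_congr rfl; intros; ring

lemma L_ge {T : ℝ} (hT : 100 ≤ T) : 2.767 ≤ Real.log (q * T / (2 * Real.pi)) := by
  have hq : (1:ℝ) ≤ q := by exact_mod_cast NeZero.one_le
  have : (15.915:ℝ) ≤ q * T / (2 * Real.pi) := by
    rw [le_div_iff₀ (by positivity)]
    have := Real.pi_lt_d4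
    nlinarith
  refine le_trans ?_ (Real.log_le_log (by norm_num) this)
  have := log_ge (c := 0.69175) (x := 15.915) (by norm_num) (by norm_num) (by norm_num)
  linarith

lemma S_bound (hχ : χ.IsPrimitive) {T θ : ℝ} (hT : 100 ≤ T) (h0 : 0 < θ) (h1 : θ ≤ 0.2823)
    (Z : Finset ℂ) (hZ : ∀ z ∈ Z, χ.LFunction z = 0 ∧ 0 < z.re ∧ z.re < 1 ∧ T < z.im)
    (hr : ∀ z ∈ Z, 1 - conj z ∈ Z) :
    ∑ z ∈ Z, Real.exp (-θ * (z.im - T)) ≤ Real.log (q * T / (2 * Real.pi)) *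
      (0.3109 / θ + 0.6995 + 0.5246 * θ + 0.0807 / (T * θ ^ 2)) := by
  set L := Real.log (q * T / (2 * Real.pi)) with hL
  have hLg : 2.767 ≤ L := L_ge hT
  have hq : (1:ℝ) ≤ q := by exact_mod_cast NeZero.one_le
  set w := Real.exp (-(4.5 * θ)) with hw
  have w0 : 0 ≤ w := (Real.exp_pos _).le
  have w1 : w < 1 := HZ.exp_lt1 (by linarith)
  set A := 3.5 / Real.pi with hA
  set C := 2 * Real.log (Real.pi ^ 2 / 6) + 0.073 with hC
  have A0 : 0 < A := by positivity
  have A1 : A ≤ 1.11409 := by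
    rw [hA, div_le_iff₀ Real.pi_pos]; have := Real.pi_gt_d6; nlinarith
  have C1 : C ≤ 1.0685 := by
    have h6 : Real.pi ^ 2 / 6 ≤ 1.64494 := by have := Real.pi_lt_d6; nlinarith [Real.pi_pos]
    have := Real.log_le_log (by positivity) h6
    have l2 := log_le (c := 0.49771/4) (x := 1.64494) (by norm_num) (by norm_num) (by norm_num)
    rw [hC]; linarith
  have C0 : 0 ≤ C := by
    have : 0 ≤ Real.log (Real.pi ^ 2 / 6) := Real.log_nonneg (by have := Real.pi_gt_three; nlinarith)
    rw [hC]; linarith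
  obtain ⟨N, hN⟩ : ∃ N : ℕ, ∀ z ∈ Z, ⌊(z.im - T) / 4.5⌋₊ + 1 < N := by
    refine ⟨Z.sup (fun z => ⌊(z.im - T) / 4.5⌋₊) + 2, fun z hz => ?_⟩
    have := Finset.le_sup (f := fun z : ℂ => ⌊(z.im - T) / 4.5⌋₊) hz
    omega
  have key : 1.11 * ∑ z ∈ Z, Real.exp (-θ * (z.im - T)) ≤
      (A * (L + 13 / T) + C) * (1 / (1 - w)) + (A * (4.5 / T)) * (w / (1 - w) ^ 2) := by
    rw [Finset.mul_sum]
    calc _ ≤ ∑ z ∈ Z, ∑ k ∈ Finset.range N, w ^ k * max 0 (U (z.im - (T + 4.5 * k))) :=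
          Finset.sum_le_sum fun z hz => one_z (hZ z hz).2.2.2 h0.le h1 (hN z hz)
      _ = ∑ k ∈ Finset.range N, w ^ k * ∑ z ∈ Z, max 0 (U (z.im - (T + 4.5 * k))) := by
          rw [Finset.sum_comm]; simp_rw [Finset.mul_sum]
      _ ≤ ∑ k ∈ Finset.range N, w ^ k * ((A * (L + 13 / T) + C) + (A * (4.5 / T)) * k) := by
          apply Finset.sum_le_sum; intro k _
          apply mul_le_mul_of_nonneg_left _ (pow_nonneg w0 k)
          have hk : (0:ℝ) ≤ k := by positivity
          refine (JU hχ (t := T + 4.5 * k) (by linarith) Z (fun z hz => ⟨(hZ z hz).1, (hZ z hz).2.1, (hZ z hz).2.2.1⟩) hr).trans ?_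
          have : Real.log (q * (T + 4.5 * k + 13) / (2 * Real.pi)) ≤ L + (13 + 4.5 * k) / T := by
            have e : (q * (T + 4.5 * k + 13) / (2 * Real.pi) : ℝ) = q * T / (2 * Real.pi) * (1 + (13 + 4.5 * k) / T) := by
              field_simp; ring
            rw [e, Real.log_mul (by positivity) (by positivity), ← hL]
            have := Real.log_le_sub_one_of_pos (x := 1 + (13 + 4.5 * k) / T) (by positivity)
            linarith
          have := mul_le_mul_of_nonneg_left this A0.le
          rw [← hA, ← hC]
          calc _ ≤ A * (L + (13 + 4.5 * k) / T) + C := by linarith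
            _ = _ := by field_simp; ring
      _ ≤ _ := geo_fin w0 w1 (by positivity) (by positivity) N
  have p1 := pade (x := 4.5 * θ) (by linarith)
  have p2 := geo2 (x := 4.5 * θ) (by linarith)
  rw [← hw] at p1 p2
  have c1 : A * (L + 13 / T) + C ≤ L * 1.5526 := by
    have : 13 / T ≤ 0.13 := by rw [div_le_iff₀ (by linarith)]; linarith
    have := mul_le_mul_of_nonneg_left this A0.le
    nlinarith
  have c2 : A * (4.5 / T) ≤ L * (1.8119 / T) := by
    rw [← mul_div_assoc, ← mul_div_assoc]
    apply div_le_div_of_nonneg_right _ (by linarith)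
    nlinarith
  have k1 : (A * (L + 13 / T) + C) * (1 / (1 - w)) ≤ L * 1.5526 * (1 / (4.5 * θ) + 1 / 2 + 4.5 * θ / 12) := by
    apply mul_le_mul c1 p1
    · exact one_div_nonneg.2 (by linarith)
    · nlinarith
  have k2 : (A * (4.5 / T)) * (w / (1 - w) ^ 2) ≤ L * (1.8119 / T) * (1 / (4.5 * θ) ^ 2) := by
    apply mul_le_mul c2 p2 (by positivity)
    have : 0 < T := by linarith
    have : 0 < L := by linarith
    positivity
  have hT0 : 0 < T := by linarith
  have hL0 : 0 < L := by linarith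
  have fin : L * 1.5526 * (1 / (4.5 * θ) + 1 / 2 + 4.5 * θ / 12) + L * (1.8119 / T) * (1 / (4.5 * θ) ^ 2)
      ≤ 1.11 * (L * (0.3109 / θ + 0.6995 + 0.5246 * θ + 0.0807 / (T * θ ^ 2))) := by
    have e1 : L * 1.5526 * (1 / (4.5 * θ) + 1 / 2 + 4.5 * θ / 12) + L * (1.8119 / T) * (1 / (4.5 * θ) ^ 2)
      = L * ((1.5526/4.5) * (1 / θ) + 1.5526 / 2 + 1.5526 * 4.5 / 12 * θ + (1.8119/20.25) * (1 / (T * θ ^ 2))) := by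
      field_simp; ring
    have e2 : 1.11 * (L * (0.3109 / θ + 0.6995 + 0.5246 * θ + 0.0807 / (T * θ ^ 2)))
      = L * ((1.11 * 0.3109) * (1 / θ) + 1.11 * 0.6995 + 1.11 * 0.5246 * θ + 1.11 * 0.0807 * (1 / (T * θ ^ 2))) := by
      field_simp
    rw [e1, e2]
    gcongr <;> norm_num
  linarith
end HZ

namespace HZ
open Filter Topology

/-- moment -/
noncomputable def mm (c b a : ℝ) : ℝ := ∫ r in Ioi (0:ℝ), r ^ a * Real.exp (-c * r ^ 2 / 2 + b * r)

lemma expo_le {c : ℝ} (hc : 0 < c) (b r : ℝ) :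
    Real.exp (-c * r ^ 2 / 2 + b * r) ≤ Real.exp (b ^ 2 / c) * Real.exp (-(c / 4) * r ^ 2) := by
  rw [← Real.exp_add, Real.exp_le_exp]
  have : b ^ 2 / c + -(c / 4) * r ^ 2 - (-c * r ^ 2 / 2 + b * r) = (b - c * r / 2) ^ 2 / c := by
    field_simp; ring
  have : 0 ≤ (b - c * r / 2) ^ 2 / c := by positivity
  linarith

lemma integ {c : ℝ} (hc : 0 < c) (b : ℝ) {a : ℝ} (ha : -1 < a) :
    IntegrableOn (fun r : ℝ => r ^ a * Real.exp (-c * r ^ 2 / 2 + b * r)) (Ioi 0) := by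
  have h := ((integrable_rpow_mul_exp_neg_mul_sq (b := c / 4) (by positivity) ha).integrableOn (s := Ioi (0:ℝ))).const_mul (Real.exp (b ^ 2 / c))
  refine h.mono' ?_ ?_
  · exact (by fun_prop : Measurable fun r : ℝ => r ^ a * Real.exp (-c * r ^ 2 / 2 + b * r)).aestronglyMeasurable
  · refine (ae_restrict_iff' measurableSet_Ioi).2 (Eventually.of_forall fun r (hr : 0 < r) => ?_)
    rw [Real.norm_of_nonneg (by positivity)]
    have := mul_le_mul_of_nonneg_left (expo_le hc b r) (Real.rpow_nonneg hr.le a)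
    linarith

lemma tend_inf {c : ℝ} (hc : 0 < c) (b : ℝ) (a : ℝ) :
    Tendsto (fun r : ℝ => r ^ a * Real.exp (-c * r ^ 2 / 2 + b * r)) atTop (𝓝 0) := by
  have h := (rpow_mul_exp_neg_mul_sq_isLittleO_exp_neg (b := c / 4) (by positivity) a).trans_tendsto
    (by
      have : Tendsto (fun x : ℝ => -(1/2:ℝ) * x) atTop atBot :=
        tendsto_id.const_mul_atTop_of_neg (by norm_num)
      exact Real.tendsto_exp_atBot.comp this)
  have h2 := h.const_mul (Real.exp (b ^ 2 / c))
  rw [mul_zero] at h2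
  refine squeeze_zero' ?_ ?_ h2
  · filter_upwards [eventually_gt_atTop 0] with r hr; positivity
  · filter_upwards [eventually_gt_atTop 0] with r hr
    have := mul_le_mul_of_nonneg_left (expo_le hc b r) (Real.rpow_nonneg hr.le a)
    linarith

lemma mm_nonneg (c b a : ℝ) : 0 ≤ mm c b a :=
  setIntegral_nonneg measurableSet_Ioi fun r (hr : 0 < r) => by positivity

lemma mm0_eq (c b : ℝ) : mm c b 0 = ∫ r in Ioi (0:ℝ), Real.exp (-c * r ^ 2 / 2 + b * r) := by
  simp [mm]

lemma hasDeriv_E (c b r : ℝ) : HasDerivAt (fun r : ℝ => Real.exp (-c * r ^ 2 / 2 + b * r))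
    ((-c * r + b) * Real.exp (-c * r ^ 2 / 2 + b * r)) r := by
  have h : HasDerivAt (fun r : ℝ => -c * r ^ 2 / 2 + b * r) (-c * r + b) r := by
    have h1 := (((hasDerivAt_pow 2 r).const_mul (-c)).div_const 2).add ((hasDerivAt_id r).const_mul b)
    refine h1.congr_deriv ?_
    push_cast; ring
  convert h.exp using 1; ring

lemma mm1 {c : ℝ} (hc : 0 < c) (b : ℝ) : c * mm c b 1 = b * mm c b 0 + 1 := by
  have i0 := integ hc b (a := 0) (by norm_num)
  have i1 := integ hc b (a := 1) (by norm_num)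
  have t := tend_inf hc b 0
  simp only [Real.rpow_zero, one_mul, Real.rpow_one] at i0 i1 t
  have := integral_Ioi_of_hasDerivAt_of_tendsto' (a := 0) (fun r _ => hasDeriv_E c b r)
    (by
      have := (i1.const_mul (-c)).add (i0.const_mul b)
      refine this.congr (Eventually.of_forall fun r => ?_)
      simp only [Pi.add_apply]; ring) t
  have e : (∫ r in Ioi (0:ℝ), (-c * r + b) * Real.exp (-c * r ^ 2 / 2 + b * r)) = -c * mm c b 1 + b * mm c b 0 := by
    simp only [mm, Real.rpow_zero, one_mul, Real.rpow_one]
    rw [← integral_const_mul, ← integral_const_mul, ← integral_add (i1.const_mul _) (i0.const_mul _)]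
    congr 1; ext r; ring
  rw [e] at this
  simp at this
  linarith

lemma mm2 {c : ℝ} (hc : 0 < c) (b : ℝ) : c * mm c b 2 = mm c b 0 + b * mm c b 1 := by
  have i0 := integ hc b (a := 0) (by norm_num)
  have i1 := integ hc b (a := 1) (by norm_num)
  have i2 := integ hc b (a := 2) (by norm_num)
  have t := tend_inf hc b 1
  simp only [Real.rpow_zero, one_mul, Real.rpow_one, Real.rpow_two] at i0 i1 i2 t
  have d : ∀ r ∈ Ici (0:ℝ), HasDerivAt (fun r : ℝ => r * Real.exp (-c * r ^ 2 / 2 + b * r))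
     (Real.exp (-c * r ^ 2 / 2 + b * r) + (-c) * (r ^ 2 * Real.exp (-c * r ^ 2 / 2 + b * r)) + b * (r * Real.exp (-c * r ^ 2 / 2 + b * r))) r := by
    intro r _
    refine ((hasDerivAt_id r).mul (hasDeriv_E c b r)).congr_deriv ?_
    simp only [id]; ring
  have ii : IntegrableOn (fun r : ℝ => Real.exp (-c * r ^ 2 / 2 + b * r) + (-c) * (r ^ 2 * Real.exp (-c * r ^ 2 / 2 + b * r))) (Ioi 0) := i0.add (i2.const_mul (-c))
  have := integral_Ioi_of_hasDerivAt_of_tendsto' (a := 0) d (ii.add (i1.const_mul b)) t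
  rw [integral_add ii (i1.const_mul b), integral_add i0 (i2.const_mul (-c)), integral_const_mul, integral_const_mul] at this
  simp only [mm, Real.rpow_zero, one_mul, Real.rpow_one, Real.rpow_two]
  simp only [zero_mul, sub_zero] at this
  linarith

lemma mm0_le {c : ℝ} (hc : 0 < c) (b : ℝ) :
    mm c b 0 ≤ Real.sqrt (2 * Real.pi / c) * Real.exp (b ^ 2 / (2 * c)) := by
  rw [mm0_eq]
  have e : ∀ r : ℝ, Real.exp (-c * r ^ 2 / 2 + b * r) = Real.exp (b ^ 2 / (2 * c)) * Real.exp (-(c / 2) * (r - b / c) ^ 2) := by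
    intro r; rw [← Real.exp_add]; congr 1; field_simp; ring
  have hg : Integrable (fun r : ℝ => Real.exp (-(c / 2) * (r - b / c) ^ 2)) :=
    (integrable_exp_neg_mul_sq (b := c / 2) (by positivity)).comp_sub_right (b / c)
  simp_rw [e]
  rw [integral_const_mul, mul_comm]
  gcongr
  refine (setIntegral_le_integral hg (Eventually.of_forall fun r => (Real.exp_pos _).le)).trans (le_of_eq ?_)
  rw [integral_sub_right_eq_self (fun r => Real.exp (-(c / 2) * r ^ 2)) (b / c), integral_gaussian]
  congr 1; field_simp

lemma mm_interp {c : ℝ} (hc : 0 < c) (b : ℝ) {σ j : ℝ} (h0 : 0 ≤ σ) (h1 : σ ≤ 1) (hj : -1 < j) :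
    mm c b (σ + j) ≤ (1 - σ) * mm c b j + σ * mm c b (j + 1) := by
  simp only [mm]
  rw [← integral_const_mul, ← integral_const_mul, ← integral_add ((integ hc b hj).const_mul _) ((integ hc b (by linarith : -1 < j + 1)).const_mul _)]
  refine setIntegral_mono_on (integ hc b (by linarith)) (((integ hc b hj).const_mul _).add ((integ hc b (by linarith : -1 < j + 1)).const_mul _)) measurableSet_Ioi ?_
  intro r (hr : 0 < r)
  have : r ^ (σ + j) ≤ (1 - σ) * r ^ j + σ * r ^ (j + 1) := by
    rw [Real.rpow_add hr, Real.rpow_add hr, Real.rpow_one]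
    have := Real.geom_mean_le_arith_mean2_weighted (w₁ := 1 - σ) (w₂ := σ) (p₁ := 1) (p₂ := r) (by linarith) h0 (by norm_num) hr.le (by ring)
    rw [Real.one_rpow, one_mul, mul_one] at this
    have hj := Real.rpow_nonneg hr.le j
    nlinarith
  have := mul_le_mul_of_nonneg_right this (Real.exp_pos (-c * r ^ 2 / 2 + b * r)).le
  linarith
end HZ

namespace HZ
open Filter Topology

/-- integrand -/
noncomputable def kk (l : ℝ) (s w : ℂ) (r : ℝ) : ℂ :=
  (r:ℂ) ^ (s - 1) * Complex.exp (-w ^ 2 * r ^ 2 / 2 + Complex.I * l * w * r)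

/-- rotated Mellin integral -/
noncomputable def II (l : ℝ) (s w : ℂ) : ℂ := ∫ r in Ioi (0:ℝ), kk l s w r

lemma norm_kk (l : ℝ) (s w : ℂ) {r : ℝ} (hr : 0 < r) :
    ‖kk l s w r‖ = r ^ (s.re - 1) * Real.exp (-(w ^ 2).re * r ^ 2 / 2 + (-l * w.im) * r) := by
  rw [kk, norm_mul, Complex.norm_cpow_eq_rpow_re_of_pos hr, Complex.norm_exp]
  congr 2
  have e : -w ^ 2 * (r:ℂ) ^ 2 / 2 + Complex.I * l * w * r = ((r ^ 2 / 2 : ℝ) : ℂ) * (-w ^ 2) + ((l * r : ℝ):ℂ) * (Complex.I * w) := by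
    push_cast; ring
  rw [e, Complex.add_re, Complex.re_ofReal_mul, Complex.re_ofReal_mul]
  simp; ring

lemma meas_kk (l : ℝ) (s w : ℂ) : Measurable (kk l s w) := by
  unfold kk
  fun_prop

lemma integ_kk (l : ℝ) {s w : ℂ} (hs : 0 < s.re) (hw : 0 < (w ^ 2).re) :
    IntegrableOn (kk l s w) (Ioi 0) := by
  refine (integ hw (-l * w.im) (a := s.re - 1) (by linarith)).mono' (meas_kk l s w).aestronglyMeasurable ?_
  refine (ae_restrict_iff' measurableSet_Ioi).2 (Eventually.of_forall fun r (hr : 0 < r) => ?_)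
  rw [norm_kk l s w hr]

lemma diff_II (l : ℝ) {s w : ℂ} (hs : 0 < s.re) (hw : 0 < (w ^ 2).re) :
    DifferentiableAt ℂ (II l s) w := by
  set c := (w ^ 2).re / 2 with hc
  have c0 : 0 < c := by positivity
  set B := ‖w‖ + 1 with hB
  let N : Set ℂ := {v | c < (v ^ 2).re ∧ ‖v‖ < B}
  have hN : N ∈ 𝓝 w := by
    apply IsOpen.mem_nhds
    · exact (isOpen_lt (f := fun _ : ℂ => c) (g := fun v : ℂ => (v ^ 2).re) continuous_const (by fun_prop)).inter (isOpen_lt (f := fun v : ℂ => ‖v‖) (g := fun _ : ℂ => B) (by fun_prop) continuous_const)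
    · exact ⟨by rw [hc]; linarith, by rw [hB]; linarith⟩
  let F' : ℂ → ℝ → ℂ := fun v r => kk l s v r * (-v * r ^ 2 + Complex.I * l * r)
  let bd : ℝ → ℝ := fun r => B * (r ^ (s.re + 1) * Real.exp (-c * r ^ 2 / 2 + (|l| * B) * r)) +
    |l| * (r ^ s.re * Real.exp (-c * r ^ 2 / 2 + (|l| * B) * r))
  refine (hasDerivAt_integral_of_dominated_loc_of_deriv_le (μ := volume.restrict (Ioi (0:ℝ))) (F := kk l s) (F' := F') (bound := bd) hN ?_ ?_ ?_ ?_ ?_ ?_).2.differentiableAt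
  · exact Eventually.of_forall fun v => (meas_kk l s v).aestronglyMeasurable
  · exact integ_kk l hs hw
  · refine ((meas_kk l s w).mul ?_).aestronglyMeasurable
    fun_prop
  · refine (ae_restrict_iff' measurableSet_Ioi).2 (Eventually.of_forall fun r (hr : 0 < r) => ?_)
    rintro v ⟨hv1, hv2⟩
    simp only [F', bd]
    rw [norm_mul, norm_kk l s v hr]
    have h1 : Real.exp (-(v ^ 2).re * r ^ 2 / 2 + (-l * v.im) * r) ≤ Real.exp (-c * r ^ 2 / 2 + (|l| * B) * r) := by
      apply Real.exp_le_exp.2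
      have a1 : c * r ^ 2 ≤ (v ^ 2).re * r ^ 2 := by gcongr
      have a2 : -l * v.im ≤ |l| * B := by
        calc -l * v.im ≤ |-l * v.im| := le_abs_self _
          _ = |l| * |v.im| := by rw [abs_mul, abs_neg]
          _ ≤ |l| * B := by
            have := (Complex.abs_im_le_norm v).trans hv2.le
            gcongr
      have a3 := mul_le_mul_of_nonneg_right a2 hr.le
      linarith
    have h2 : ‖-v * (r:ℂ) ^ 2 + Complex.I * l * r‖ ≤ B * r ^ 2 + |l| * r := by
      refine (norm_add_le _ _).trans ?_
      simp only [norm_mul, norm_neg, norm_pow, Complex.norm_real, Complex.norm_I, Real.norm_eq_abs, abs_of_pos hr, one_mul]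
      gcongr
    calc _ ≤ (r ^ (s.re - 1) * Real.exp (-c * r ^ 2 / 2 + (|l| * B) * r)) * (B * r ^ 2 + |l| * r) := by
          gcongr
      _ = _ := by
          have e1 : r ^ (s.re + 1) = r ^ (s.re - 1) * r ^ 2 := by
            rw [← Real.rpow_two, ← Real.rpow_add hr]; congr 1; ring
          have e2 : r ^ s.re = r ^ (s.re - 1) * r := by
            nth_rewrite 3 [← Real.rpow_one r]
            rw [← Real.rpow_add hr]; congr 1; ring
          rw [e1, e2]; ring
  · exact ((integ c0 _ (by linarith)).const_mul _).add ((integ c0 _ (by linarith)).const_mul _)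
  · refine Eventually.of_forall fun r v _ => ?_
    have h : HasDerivAt (fun v : ℂ => -v ^ 2 * (r:ℂ) ^ 2 / 2 + Complex.I * l * v * r) (-v * r ^ 2 + Complex.I * l * r) v := by
      have h1 := ((((hasDerivAt_pow 2 v).neg).mul_const ((r:ℂ) ^ 2)).div_const 2).add
        (((hasDerivAt_id v).const_mul (Complex.I * l)).mul_const (r:ℂ))
      refine h1.congr_deriv ?_
      push_cast; ring
    refine (h.cexp.const_mul ((r:ℂ) ^ (s - 1))).congr_deriv ?_
    simp only [F', kk]; ring

lemma scale (l : ℝ) {s : ℂ} {x : ℝ} (hx : 0 < x) : (x:ℂ) ^ s * II l s x = II l s 1 := by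
  have h := integral_comp_mul_left_Ioi (kk l s 1) 0 hx
  rw [mul_zero] at h
  have e : ∫ r in Ioi (0:ℝ), kk l s 1 (x * r) = (x:ℂ) ^ (s - 1) * II l s x := by
    rw [II, ← integral_const_mul]
    refine setIntegral_congr_fun measurableSet_Ioi fun r (hr : 0 < r) => ?_
    simp only [kk]
    rw [Complex.ofReal_mul, Complex.mul_cpow_ofReal_nonneg hx.le hr.le, mul_assoc]
    congr 2; congr 1; ring
  rw [e] at h
  have hx' : (x:ℂ) ≠ 0 := by exact_mod_cast hx.ne'
  have h2 : (x:ℂ) ^ s = x * (x:ℂ) ^ (s - 1) := by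
    rw [Complex.cpow_sub _ _ hx', Complex.cpow_one]; field_simp
  rw [h2, mul_assoc, h, Complex.real_smul, Complex.ofReal_inv, ← mul_assoc, mul_inv_cancel₀ hx', one_mul]
  rfl

lemma rot (l : ℝ) {s w : ℂ} (hs : 0 < s.re) (hw : |w.im| < w.re) : w ^ s * II l s w = II l s 1 := by
  let Ω : Set ℂ := {w | |w.im| < w.re}
  have hO : IsOpen Ω := isOpen_lt (by fun_prop) (by fun_prop)
  have hconv : Convex ℝ Ω := by
    intro a ha b hb t u ht hu htu
    simp only [Ω, Set.mem_ofPred_eq, abs_lt] at *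
    simp only [Complex.add_im, Complex.add_re, Complex.real_smul, Complex.re_ofReal_mul, Complex.im_ofReal_mul]
    rcases ht.eq_or_lt with rfl | ht'
    · have : u = 1 := by linarith
      subst this; simpa using hb
    · constructor <;> nlinarith
  have hsq : ∀ v ∈ Ω, 0 < (v ^ 2).re := by
    intro v hv
    simp only [Ω, Set.mem_ofPred_eq] at hv
    have : (v ^ 2).re = v.re ^ 2 - v.im ^ 2 := by rw [sq, Complex.mul_re]; ring
    rw [this, ← sq_abs v.im]
    nlinarith [abs_nonneg v.im]
  have hd : DifferentiableOn ℂ (fun v => v ^ s * II l s v) Ω := by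
    intro v hv
    have hv0 : v ∈ Complex.slitPlane := by
      left; simp only [Ω, Set.mem_ofPred_eq] at hv; exact (abs_nonneg _).trans_lt hv
    exact (((differentiableAt_id.cpow_const hv0)).mul (diff_II l hs (hsq v hv))).differentiableWithinAt
  have h1 : (1:ℂ) ∈ Ω := by simp [Ω]
  have fr : ∃ᶠ z : ℂ in 𝓝[≠] (1:ℂ), z ^ s * II l s z = II l s 1 := by
    have t : Tendsto (fun x : ℝ => (x:ℂ)) (𝓝[≠] (1:ℝ)) (𝓝[≠] (1:ℂ)) := by
      refine tendsto_nhdsWithin_of_tendsto_nhds_of_eventually_within _ ?_ ?_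
      · exact ((Complex.continuous_ofReal.tendsto' 1 1 (by simp)).mono_left nhdsWithin_le_nhds)
      · filter_upwards [self_mem_nhdsWithin] with x hx
        simpa using hx
    refine t.frequently (Eventually.frequently ?_)
    filter_upwards [nhdsWithin_le_nhds (Ioi_mem_nhds (zero_lt_one (α := ℝ)))] with x hx
    exact scale l hx
  exact (hd.analyticOnNhd hO).eqOn_of_preconnected_of_frequently_eq (analyticOnNhd_const) hconv.isPreconnected h1 fr hw

lemma recur (l : ℝ) {s : ℂ} (hs : 0 < s.re) : s * II l s 1 = II l (s + 2) 1 - Complex.I * l * II l (s + 1) 1 := by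
  have h1 : 0 < ((1:ℂ) ^ 2).re := by simp
  have i0 := integ_kk l hs h1
  have i1 := integ_kk l (s := s + 1) (by simp; linarith) h1
  have i2 := integ_kk l (s := s + 2) (by simp; linarith) h1
  have d : ∀ r ∈ Ioi (0:ℝ), HasDerivAt (kk l (s + 1) 1)
      (s * kk l s 1 r + (-1) * kk l (s + 2) 1 r + Complex.I * l * kk l (s + 1) 1 r) r := by
    intro r (hr : 0 < r)
    have hr' : (r:ℂ) ≠ 0 := by exact_mod_cast hr.ne'
    have hE : HasDerivAt (fun v : ℂ => -1 ^ 2 * v ^ 2 / 2 + Complex.I * l * 1 * v) (-r + Complex.I * l) (r:ℂ) := by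
      have h1 := (((hasDerivAt_pow 2 (r:ℂ)).const_mul (-1 ^ 2)).div_const 2).add
        (((hasDerivAt_id (r:ℂ)).const_mul (Complex.I * l * 1)))
      refine h1.congr_deriv ?_
      push_cast; ring
    have hp : HasDerivAt (fun v : ℂ => v ^ (s + 1 - 1)) ((s + 1 - 1) * (r:ℂ) ^ (s + 1 - 1 - 1) * 1) (r:ℂ) :=
      (hasDerivAt_id (r:ℂ)).cpow_const (Or.inl (by simpa using hr))
    refine ((hp.mul hE.cexp).comp_ofReal).congr_deriv ?_
    simp only [kk]
    have e1 : (r:ℂ) ^ (s + 2 - 1) = (r:ℂ) ^ (s + 1 - 1) * r := by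
      rw [show s + 2 - 1 = (s + 1 - 1) + 1 by ring, Complex.cpow_add _ _ hr', Complex.cpow_one]
    rw [e1]
    simp only [add_sub_cancel_right]
    ring
  have t0 : Tendsto (kk l (s + 1) 1) (𝓝[>] 0) (𝓝 0) := by
    rw [tendsto_zero_iff_norm_tendsto_zero]
    have : Tendsto (fun r : ℝ => r ^ s.re * Real.exp (-1 * r ^ 2 / 2 + 0 * r)) (𝓝[>] 0) (𝓝 0) := by
      have c : ContinuousAt (fun r : ℝ => r ^ s.re * Real.exp (-1 * r ^ 2 / 2 + 0 * r)) 0 := by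
        refine ContinuousAt.mul (Real.continuousAt_rpow_const _ _ (Or.inr hs.le)) (by fun_prop)
      have := c.tendsto
      simp only [Real.zero_rpow hs.ne', zero_mul] at this
      simpa using this.mono_left nhdsWithin_le_nhds
    refine this.congr' ?_
    filter_upwards [self_mem_nhdsWithin] with r (hr : 0 < r)
    rw [norm_kk _ _ _ hr]; simp
  have ti : Tendsto (kk l (s + 1) 1) atTop (𝓝 0) := by
    rw [tendsto_zero_iff_norm_tendsto_zero]
    refine (tend_inf (c := 1) one_pos 0 s.re).congr' ?_
    filter_upwards [eventually_gt_atTop 0] with r hr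
    rw [norm_kk _ _ _ hr]; simp
  have ii : IntegrableOn (fun r => s * kk l s 1 r + (-1) * kk l (s + 2) 1 r) (Ioi 0) := (i0.const_mul s).add (i2.const_mul (-1))
  have k0 : kk l (s + 1) 1 0 = 0 := by
    have hs0 : s ≠ 0 := by rintro rfl; simp at hs
    simp [kk, hs0]
  have cw : ContinuousWithinAt (kk l (s + 1) 1) (Ici 0) 0 := by
    rw [← continuousWithinAt_Ioi_iff_Ici, ContinuousWithinAt, k0]; exact t0
  have := integral_Ioi_of_hasDerivAt_of_tendsto cw d (ii.add (i1.const_mul (Complex.I * l))) ti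
  rw [k0] at this
  rw [integral_add ii (i1.const_mul _), integral_add (i0.const_mul s) (i2.const_mul (-1)), integral_const_mul, integral_const_mul, integral_const_mul] at this
  simp only [II]
  linear_combination this

lemma norm_II {l θ b : ℝ} {s : ℂ} (hs : 0 < s.re) (h0 : 0 < θ) (h1 : θ < Real.pi / 4)
    (hb : -l * Real.sin θ ≤ b) :
    ‖II l s 1‖ ≤ Real.exp (-θ * s.im) * mm (Real.cos (2 * θ)) b (s.re - 1) := by
  set w := Complex.exp (θ * Complex.I) with hw
  have wre : w.re = Real.cos θ := by rw [hw, Complex.exp_ofReal_mul_I_re]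
  have wim : w.im = Real.sin θ := by rw [hw, Complex.exp_ofReal_mul_I_im]
  have sp : 0 < Real.sin θ := Real.sin_pos_of_pos_of_lt_pi h0 (by linarith [Real.pi_pos])
  have cp : 0 < Real.cos θ := Real.cos_pos_of_mem_Ioo ⟨by linarith [Real.pi_pos], by linarith [Real.pi_pos]⟩
  have c2p : 0 < Real.cos (2 * θ) := Real.cos_pos_of_mem_Ioo ⟨by linarith [Real.pi_pos], by linarith⟩
  have sc : Real.sin θ < Real.cos θ := by
    have := Real.cos_sq_add_sin_sq θ
    rw [Real.cos_two_mul] at c2p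
    nlinarith
  have hΩ : |w.im| < w.re := by rw [wim, wre, abs_of_pos sp]; exact sc
  have w2 : (w ^ 2).re = Real.cos (2 * θ) := by
    rw [sq, Complex.mul_re, wre, wim, Real.cos_two_mul']; ring
  rw [← rot l hs hΩ, norm_mul]
  have e1 : ‖w ^ s‖ = Real.exp (-θ * s.im) := by
    rw [Complex.cpow_def_of_ne_zero (Complex.exp_ne_zero _), Complex.log_exp, Complex.norm_exp]
    · simp
    · simp; linarith [Real.pi_pos]
    · simp; linarith [Real.pi_pos]
  rw [e1]
  gcongr
  rw [II, mm]
  refine norm_integral_le_of_norm_le (integ c2p b (by linarith)) ?_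
  refine (ae_restrict_iff' measurableSet_Ioi).2 (Eventually.of_forall fun r (hr : 0 < r) => ?_)
  rw [norm_kk l s w hr, w2, wim]
  have := mul_le_mul_of_nonneg_right hb hr.le
  gcongr

lemma F_bound {l θ b : ℝ} {s : ℂ} (hs : 0 < s.re) (hs1 : s.re < 1) (h0 : 0 < θ) (h1 : θ < Real.pi / 4)
    (hb : -l * Real.sin θ ≤ b) :
    s.im * ‖II l s 1‖ ≤ Real.exp (-θ * s.im) *
      ((1 - s.re) * (mm (Real.cos (2 * θ)) b 1 + |l| * mm (Real.cos (2 * θ)) b 0)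
        + s.re * (mm (Real.cos (2 * θ)) b 2 + |l| * mm (Real.cos (2 * θ)) b 1)) := by
  have c2p : 0 < Real.cos (2 * θ) := Real.cos_pos_of_mem_Ioo ⟨by linarith [Real.pi_pos], by linarith⟩
  have n1 := norm_II (s := s + 1) (by simp; linarith) h0 h1 hb
  have n2 := norm_II (s := s + 2) (by simp; linarith) h0 h1 hb
  have j1 := mm_interp c2p b (σ := s.re) (j := 0) hs.le hs1.le (by norm_num)
  have j2 := mm_interp c2p b (σ := s.re) (j := 1) hs.le hs1.le (by norm_num)
  have r1 : (s + 1).re - 1 = s.re + 0 := by simp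
  have r2 : (s + 2).re - 1 = s.re + 1 := by simp; ring
  have r3 : (s + 1).im = s.im := by simp
  have r4 : (s + 2).im = s.im := by simp
  rw [r1, r3] at n1
  rw [r2, r4] at n2
  norm_num at j1 j2
  rw [add_zero] at n1
  have h := recur l hs
  have : s.im * ‖II l s 1‖ ≤ ‖II l (s + 2) 1‖ + |l| * ‖II l (s + 1) 1‖ := by
    calc _ ≤ ‖s‖ * ‖II l s 1‖ := by
          gcongr; exact (le_abs_self _).trans (Complex.abs_im_le_norm s)
      _ = ‖s * II l s 1‖ := (norm_mul _ _).symm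
      _ ≤ _ := by
          rw [h]
          refine (norm_sub_le _ _).trans ?_
          simp [norm_mul]
  refine this.trans ?_
  have ep := Real.exp_pos (-θ * s.im)
  have k1 := n1.trans (mul_le_mul_of_nonneg_left j1 ep.le)
  have k2 := n2.trans (mul_le_mul_of_nonneg_left j2 ep.le)
  have k3 := mul_le_mul_of_nonneg_left k1 (abs_nonneg l)
  linarith
end HZ

namespace HZ

lemma cos_lb {x : ℝ} (h0 : 0 ≤ x) (h1 : x ≤ 1) :
    1 - x ^ 2 / 2 + x ^ 4 / 24 - x ^ 6 / 720 - x ^ 8 * (9 / 322560) ≤ Real.cos x := by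
  have hn : ‖((x:ℂ) * Complex.I)‖ = x := by simp [abs_of_nonneg h0]
  have h := Complex.exp_bound (x := (x:ℂ) * Complex.I) (by rw [hn]; exact h1) (n := 8) (by norm_num)
  rw [hn] at h
  have h2 := (Complex.abs_re_le_norm _).trans h
  rw [Complex.sub_re, Complex.exp_ofReal_mul_I_re] at h2
  have e : (∑ m ∈ Finset.range 8, ((x:ℂ) * Complex.I) ^ m / (m.factorial : ℂ)).re = 1 - x ^ 2 / 2 + x ^ 4 / 24 - x ^ 6 / 720 := by
    have : (∑ m ∈ Finset.range 8, ((x:ℂ) * Complex.I) ^ m / (m.factorial : ℂ)) =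
      ((1 - x ^ 2 / 2 + x ^ 4 / 24 - x ^ 6 / 720 : ℝ) : ℂ) + ((x - x ^ 3 / 6 + x ^ 5 / 120 - x ^ 7 / 5040 : ℝ) : ℂ) * Complex.I := by
      simp only [Finset.sum_range_succ, Finset.sum_range_zero, Nat.factorial, mul_pow]
      have i2 := Complex.I_sq
      have i3 : Complex.I ^ 3 = -Complex.I := by rw [pow_succ, i2]; ring
      have i4 : Complex.I ^ 4 = 1 := Complex.I_pow_four
      have i5 : Complex.I ^ 5 = Complex.I := by rw [pow_succ, i4]; ring
      have i6 : Complex.I ^ 6 = -1 := by rw [pow_succ, i5, ← sq, i2]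
      have i7 : Complex.I ^ 7 = -Complex.I := by rw [pow_succ, i6]; ring
      rw [i2, i3, i4, i5, i6, i7]
      push_cast
      ring
    rw [this, Complex.add_re, Complex.ofReal_re, Complex.re_ofReal_mul]; simp
  rw [e] at h2
  have := (abs_le.1 h2).1
  norm_num [Nat.factorial] at this
  linarith

/-- counting factor -/
noncomputable def PP (θ T : ℝ) : ℝ := 0.3109 / θ + 0.6995 + 0.5246 * θ + 0.0807 / (T * θ ^ 2)

/-- averaged moment factor -/
noncomputable def HH (c b l : ℝ) : ℝ := (l * mm c b 0 + (1 + l) * mm c b 1 + mm c b 2) / 2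

lemma PP_pos {θ T : ℝ} (h0 : 0 < θ) (hT : 0 < T) : 0 < PP θ T := by unfold PP; positivity

lemma H_le {c s l ε G : ℝ} (hc : 0 < c) (hc1 : c ≤ 1) (hl : 0 ≤ l) (hs : 0 ≤ s)
    (hG : mm c (l * s) 0 ≤ G) (hε : 1 / c ≤ ε * G) :
    HH c (l * s) l ≤ G * ((1 + ε) * (l * (1 + s / c) + 1 / c) + l ^ 2 * (s / c + (s / c) ^ 2)) / 2 := by
  have m1 := mm1 hc (l * s)
  have m2 := mm2 hc (l * s)
  set m := mm c (l * s) 0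
  have e1 : mm c (l * s) 1 = (l * s * m + 1) / c := by field_simp; linarith
  have e2 : mm c (l * s) 2 = (m + l * s * ((l * s * m + 1) / c)) / c := by
    rw [← e1]; field_simp; linarith
  have hG0 : 0 < ε * G := lt_of_lt_of_le (by positivity) hε
  have i1 : 1 ≤ 1 / c := by rw [le_div_iff₀ hc]; linarith
  have a0 : 0 ≤ s / c := by positivity
  have hm : HH c (l * s) l = (m * (l * (1 + s / c) + 1 / c + l ^ 2 * (s / c + (s / c) ^ 2)) + (1 / c) * (1 + l * (1 + s / c))) / 2 := by
    rw [HH, e1, e2]; field_simp; ring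
  rw [hm]
  have k1 : m * (l * (1 + s / c) + 1 / c + l ^ 2 * (s / c + (s / c) ^ 2)) ≤ G * (l * (1 + s / c) + 1 / c + l ^ 2 * (s / c + (s / c) ^ 2)) := by
    gcongr
  have k2 : (1 / c) * (1 + l * (1 + s / c)) ≤ (ε * G) * (1 / c + l * (1 + s / c)) := by
    gcongr
  linarith

set_option maxHeartbeats 1000000 in
lemma core {T l u θ c1 a S K lam ε : ℝ} (hT : 0 < T) (hl : 0 ≤ l) (hu : l ^ 2 = u * T) (h0 : 0 < θ)
    (h1 : θ ≤ 0.2823) (hc1 : 0 < c1) (hc : c1 ≤ Real.cos (2 * θ)) (ha0 : 0 ≤ a)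
    (ha : (1 - c1) / 2 ≤ (a * c1) ^ 2) (hS : (1 - c1) / 2 ≤ S * c1) (hK0 : 0 ≤ K)
    (hK : 6.2832 ≤ K ^ 2 * c1) (hlam : l ≤ lam * T) (he0 : 0 ≤ ε)
    (hε : 1 / c1 ≤ ε * (2.5 * Real.exp (0.48 * u * T * θ ^ 2))) :
    Real.exp (-θ * T) * PP θ T * HH (Real.cos (2 * θ)) (l * Real.sin θ) l / T ≤
      K * PP θ T * ((1 + ε) * (lam * (1 + a) + 1 / (c1 * T)) + u * (a + a ^ 2)) / 2 * Real.exp (T * (u * S / 2 - θ)) := by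
  set c := Real.cos (2 * θ) with hcdef
  set s := Real.sin θ with hs
  have c0 : 0 < c := lt_of_lt_of_le hc1 hc
  have cle : c ≤ 1 := Real.cos_le_one _
  have s2 : s ^ 2 = (1 - c) / 2 := by
    rw [hcdef, Real.cos_two_mul, hs]; nlinarith [Real.sin_sq_add_cos_sq θ]
  have slb : 0.98 * θ ≤ s := by
    have := Real.sin_gt_sub_cube h0
    nlinarith [mul_pos h0 h0]
  have s0 : 0 ≤ s := by linarith
  have sa : s ≤ a * c1 := by
    apply le_of_sq_le_sq _ (by positivity) |> fun h => h
    linarith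
  have sc : s / c ≤ a := by
    rw [div_le_iff₀ c0]; nlinarith
  have sS : s ^ 2 ≤ S * c1 := by linarith
  have S0 : 0 ≤ S := by
    by_contra h; push Not at h
    nlinarith
  have u0 : 0 ≤ u := by
    by_contra h; push Not at h
    nlinarith [sq_nonneg l]
  have sS' : s ^ 2 / c ≤ S := by rw [div_le_iff₀ c0]; nlinarith
  set Eb := (l * s) ^ 2 / (2 * c) with hEb
  have Elow : 0.48 * u * T * θ ^ 2 ≤ Eb := by
    rw [hEb, mul_pow, hu, le_div_iff₀ (by positivity)]
    have : (0.98 * θ) ^ 2 ≤ s ^ 2 := by gcongr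
    have h3 : 0 ≤ u * T := by positivity
    have h4 := mul_le_mul_of_nonneg_left this h3
    have h5 : 0 ≤ u * T * θ ^ 2 := by positivity
    nlinarith
  have Eup : Eb ≤ T * (u * S / 2) := by
    have : Eb = u * T / 2 * (s ^ 2 / c) := by rw [hEb, mul_pow, hu]; field_simp
    rw [this]
    have := mul_le_mul_of_nonneg_left sS' (by positivity : 0 ≤ u * T / 2)
    linarith
  have hsq : Real.sqrt (2 * Real.pi / c) ≤ K := by
    rw [Real.sqrt_le_left hK0, div_le_iff₀ c0]
    have := Real.pi_lt_d4
    nlinarith [mul_le_mul_of_nonneg_left hc (sq_nonneg K)]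
  have hsq2 : 2.5 ≤ Real.sqrt (2 * Real.pi / c) := by
    apply Real.le_sqrt_of_sq_le
    rw [le_div_iff₀ c0]
    have := Real.pi_gt_d2
    linarith
  have hε2 : 1 / c ≤ ε * (Real.sqrt (2 * Real.pi / c) * Real.exp Eb) := by
    calc 1 / c ≤ 1 / c1 := by gcongr
      _ ≤ _ := hε
      _ ≤ _ := by gcongr
  have H := H_le (s := s) (l := l) c0 cle hl s0 (mm0_le c0 (l * s)) hε2
  have P0 := PP_pos h0 hT
  have e3 : Real.exp (T * (u * S / 2 - θ)) = Real.exp (T * (u * S / 2)) * Real.exp (-θ * T) := by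
    rw [← Real.exp_add]; congr 1; ring
  rw [e3]
  have lam0 : 0 ≤ lam * T := hl.trans hlam
  calc _ ≤ Real.exp (-θ * T) * PP θ T * ((Real.sqrt (2 * Real.pi / c) * Real.exp Eb) * ((1 + ε) * (l * (1 + s / c) + 1 / c) + l ^ 2 * (s / c + (s / c) ^ 2)) / 2) / T := by gcongr
    _ ≤ Real.exp (-θ * T) * PP θ T * ((K * Real.exp (T * (u * S / 2))) * ((1 + ε) * (lam * T * (1 + a) + 1 / c1) + l ^ 2 * (a + a ^ 2)) / 2) / T := by gcongr
    _ = _ := by rw [hu]; field_simp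

/-- combine both terms -/
lemma combine {T l u θ S Q X e1 e2 D : ℝ} (hT : 0 < T) (hl : 0 < l) (hu : l ^ 2 = u * T)
    (hX : X ≤ Q * Real.exp (T * (u * S / 2 - θ)))
    (h1 : e1 ≤ Real.exp (-(T * (0.1598 - θ + u * S / 2))))
    (h2 : e2 ≤ Real.exp (T * (θ - u * S / 2 - 0.426 / u))) (he2 : 0 ≤ e2)
    (hD0 : 0 ≤ D) (hD : (6.2832 * D) ^ 2 ≤ u * T)
    (hQ : Q ≤ 4.328 * e1 + 0.802 * D * e2) :
    X ≤ 4.328 * Real.exp (-0.1598 * T) + 0.802 * (l / (2 * Real.pi)) * Real.exp (-0.1065 * (2 * T / l) ^ 2) := by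
  have u0 : 0 < u := by
    by_contra h; push Not at h
    nlinarith [sq_pos_of_pos hl]
  have hDl : D ≤ l / (2 * Real.pi) := by
    rw [le_div_iff₀ (by positivity)]
    have h3 : 6.2832 * D ≤ l := by
      apply le_of_sq_le_sq _ hl.le |> fun h => h
      rw [hu]; exact hD
    have := Real.pi_lt_d4
    nlinarith
  have x1 : Real.exp (-0.1598 * T) = Real.exp (-(T * (0.1598 - θ + u * S / 2))) * Real.exp (T * (u * S / 2 - θ)) := by
    rw [← Real.exp_add]; congr 1; ring
  have x2 : Real.exp (-0.1065 * (2 * T / l) ^ 2) = Real.exp (T * (θ - u * S / 2 - 0.426 / u)) * Real.exp (T * (u * S / 2 - θ)) := by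
    rw [← Real.exp_add]; congr 1
    rw [div_pow, hu]; field_simp; ring
  rw [x1, x2]
  refine hX.trans ?_
  have e0 := Real.exp_pos (T * (u * S / 2 - θ))
  have : Q ≤ 4.328 * Real.exp (-(T * (0.1598 - θ + u * S / 2))) + 0.802 * (l / (2 * Real.pi)) * Real.exp (T * (θ - u * S / 2 - 0.426 / u)) := by
    refine hQ.trans ?_
    gcongr
  have := mul_le_mul_of_nonneg_right this e0.le
  linarith
end HZ

namespace HZ

lemma exp_ge_cubic {z : ℝ} (hz : 0 ≤ z) : 1 + z + z ^ 2 / 2 + z ^ 3 / 6 ≤ Real.exp z := by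
  have hT := Real.sum_le_exp_of_nonneg hz 4
  norm_num [Finset.sum_range_succ, Nat.factorial] at hT
  linarith

lemma exp8 {x : ℝ} (h : 8 ≤ x) : 2800 ≤ Real.exp x := by
  refine le_trans ?_ (Real.exp_le_exp.2 h)
  have h1 := Real.exp_one_gt_d9
  have : Real.exp 8 = Real.exp 1 ^ 8 := by rw [← Real.exp_nat_mul]; norm_num
  rw [this]
  calc (2800:ℝ) ≤ 2.7 ^ 8 := by norm_num
    _ ≤ _ := by gcongr; linarith

/-- target -/
def Good (T l : ℝ) : Prop := ∃ θ : ℝ, 0 < θ ∧ θ ≤ 0.2823 ∧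
  Real.exp (-θ * T) * PP θ T * HH (Real.cos (2 * θ)) (l * Real.sin θ) l / T ≤
    4.328 * Real.exp (-0.1598 * T) + 0.802 * (l / (2 * Real.pi)) * Real.exp (-0.1065 * (2 * T / l) ^ 2)

lemma cell {T l u : ℝ} (θ c1 a S K lam ua ub Ta Tb z e1 β D P : ℝ) (hl : 0 < l) (hu : l ^ 2 = u * T)
    (hua : ua ≤ u) (hub : u ≤ ub) (hTa : Ta ≤ T) (hlam : l ≤ lam * T)
    (n0 : 2.6 < ua ∧ 100 ≤ Ta ∧ 0.25 < θ ∧ θ ≤ 0.2823 ∧ 0.8 ≤ c1 ∧ 0 ≤ a ∧ 0 ≤ S ∧ 0 ≤ K ∧ 0 ≤ lam)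
    (hc : c1 ≤ 1 - (2 * θ) ^ 2 / 2 + (2 * θ) ^ 4 / 24 - (2 * θ) ^ 6 / 720 - (2 * θ) ^ 8 * (9 / 322560))
    (ha : (1 - c1) / 2 ≤ (a * c1) ^ 2) (hS : (1 - c1) / 2 ≤ S * c1)
    (hK : 6.2832 ≤ K ^ 2 * c1) (n1 : 8 ≤ 0.48 * ua * Ta * θ ^ 2)
    (hP : 0.3109 / θ + 0.6995 + 0.5246 * θ + 0.0807 / (Ta * θ ^ 2) ≤ P)
    (hβ0 : 0 ≤ β) (hβa : β * ua ≤ θ * ua - ua ^ 2 * S / 2 - 0.426)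
    (hβb : β * ub ≤ θ * ub - ub ^ 2 * S / 2 - 0.426)
    (he1 : e1 = 0 ∨ (T ≤ Tb ∧ 0 ≤ z ∧ z ≤ 64 ∧ 0 < Tb ∧ (0.1598 - θ + ub * S / 2) * Tb ≤ z ∧ e1 ≤ (1 - z / 64) ^ 64))
    (hD0 : 0 ≤ D) (hD : (6.2832 * D) ^ 2 ≤ ua * Ta)
    (hQ : K * P * ((1 + 0.001) * (lam * (1 + a) + 1 / (c1 * Ta)) + ub * (a + a ^ 2)) / 2 ≤
      4.328 * e1 + 0.802 * D * (1 + β * Ta + (β * Ta) ^ 2 / 2 + (β * Ta) ^ 3 / 6)) : Good T l := by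
  obtain ⟨k1, k2, k3, k4, k5, k6, k7, k8, k9⟩ := n0
  have hT : 0 < T := by linarith
  have hθ : 0 < θ := by linarith
  have hu0 : 0 < u := by linarith
  have hTa0 : 0 < Ta := by linarith
  refine ⟨θ, hθ, k4, ?_⟩
  have c0 : 0 < c1 := by linarith
  have huT : ua * Ta ≤ u * T := by gcongr
  have P0 := PP_pos hθ hT
  have hPP : PP θ T ≤ P := by
    refine le_trans ?_ hP
    unfold PP; gcongr
  have hco := core (T := T) (l := l) (u := u) (θ := θ) (c1 := c1) (a := a) (S := S) (K := K) (lam := lam) (ε := 0.001)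
    hT hl.le hu hθ k4 c0 (hc.trans (cos_lb (by linarith) (by linarith))) k6 ha hS k8 hK hlam (by norm_num)
    (by
      have e8 : 2800 ≤ Real.exp (0.48 * u * T * θ ^ 2) := exp8 (by
        refine n1.trans ?_
        have := mul_le_mul_of_nonneg_right huT (sq_nonneg θ)
        linarith)
      have : 1 / c1 ≤ 1.25 := by rw [div_le_iff₀ c0]; linarith
      linarith)
  refine combine hT hl hu (hco.trans (mul_le_mul_of_nonneg_right ?_ (Real.exp_pos _).le)) (e1 := e1)
    (e2 := 1 + β * Ta + (β * Ta) ^ 2 / 2 + (β * Ta) ^ 3 / 6) (D := D) ?_ ?_ (by positivity) hD0 (hD.trans huT) hQ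
  · have KP : 0 ≤ K * P := mul_nonneg k8 (P0.le.trans hPP)
    gcongr
  · rcases he1 with h | ⟨b1, b2, b3, b4, b5, b6⟩
    · rw [h]; exact (Real.exp_pos _).le
    · refine b6.trans ((Real.one_sub_div_pow_le_exp_neg (n := 64) (by exact_mod_cast b3)).trans ?_)
      apply Real.exp_le_exp.2
      apply neg_le_neg
      have h1 : 0.1598 - θ + u * S / 2 ≤ 0.1598 - θ + ub * S / 2 := by gcongr
      rcases le_total 0 (0.1598 - θ + u * S / 2) with h | h
      · calc T * (0.1598 - θ + u * S / 2) ≤ Tb * (0.1598 - θ + ub * S / 2) := by gcongr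
          _ ≤ z := by linarith
      · exact (mul_nonpos_of_nonneg_of_nonpos hT.le h).trans b2
  · refine (exp_ge_cubic (by positivity)).trans (Real.exp_le_exp.2 ?_)
    have hb : β ≤ θ - u * S / 2 - 0.426 / u := by
      have : θ - u * S / 2 - 0.426 / u = (θ * u - u ^ 2 * S / 2 - 0.426) / u := by field_simp
      rw [this, le_div_iff₀ hu0]
      have hp := mul_nonneg k7 (mul_nonneg (sub_nonneg.2 hua) (sub_nonneg.2 hub))
      rcases (hua.trans hub).eq_or_lt with h | h
      · have : u = ua := le_antisymm (by linarith) hua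
        rw [this]; exact hβa
      · have q1 := mul_le_mul_of_nonneg_right hβa (sub_nonneg.2 hub)
        have q2 := mul_le_mul_of_nonneg_right hβb (sub_nonneg.2 hua)
        have q3 : 0 ≤ (ub - ua) * (θ * u - u ^ 2 * S / 2 - 0.426 - β * u) := by
          have h3 : 0 ≤ (ub - ua) * (S * ((u - ua) * (ub - u))) := mul_nonneg (by linarith) hp
          linarith
        have := nonneg_of_mul_nonneg_right q3 (by linarith : 0 < ub - ua)
        linarith
    calc β * Ta ≤ β * T := by gcongr
      _ ≤ T * (θ - u * S / 2 - 0.426 / u) := by rw [mul_comm]; gcongr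
end HZ

namespace HZ

lemma lam_of {l T u lam ub Ta : ℝ} (hT : 0 < T) (hu : l ^ 2 = u * T) (h1 : u ≤ ub) (h2 : Ta ≤ T)
    (h0 : 0 ≤ lam) (h : ub ≤ lam ^ 2 * Ta) : l ≤ lam * T := by
  refine (abs_le_of_sq_le_sq' (b := lam * T) ?_ (by positivity)).2
  have : ub ≤ lam ^ 2 * T := h.trans (by gcongr)
  calc l ^ 2 = u * T := hu
    _ ≤ (lam ^ 2 * T) * T := by gcongr; linarith
    _ = (lam * T) ^ 2 := by ring

lemma strip1 {T l u : ℝ} (hl : 0 < l) (hT : 0 < T) (hu : l ^ 2 = u * T)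
    (hua : 2.6666 ≤ u) (hub : u ≤ 2.77) (hTu : 39.478 * u ≤ T) (hlam : l ≤ 0.15916 * T) : Good T l := by
  rcases le_total T 205 with h1 | h1
  · exact cell 0.278 0.84937 0.32311 0.088672 2.7199 0.15916 2.6666 2.77 105.27 205 0.946 0.3855 0.000019 2.666 1.9737
      hl hu hua hub (by linarith) hlam (by norm_num)
      (by norm_num) (by norm_num) (by norm_num) (by norm_num) (by norm_num) (by norm_num) (by norm_num)
      (by norm_num) (by norm_num) (Or.inr ⟨h1, by norm_num, by norm_num, by norm_num, by norm_num, by norm_num⟩) (by norm_num) (by norm_num) (by norm_num)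
  rcases le_total T 410 with h2 | h2
  · exact cell 0.278 0.84937 0.32311 0.088672 2.7199 0.11625 2.6666 2.77 205 410 1.891 0.1466 0.000019 3.721 1.9688
      hl hu hua hub h1 (lam_of hT hu hub h1 (by norm_num) (by norm_num)) (by norm_num)
      (by norm_num) (by norm_num) (by norm_num) (by norm_num) (by norm_num) (by norm_num) (by norm_num)
      (by norm_num) (by norm_num) (Or.inr ⟨h2, by norm_num, by norm_num, by norm_num, by norm_num, by norm_num⟩) (by norm_num) (by norm_num) (by norm_num)
  exact cell 0.28 0.84725 0.32619 0.090145 2.7233 0.0822 2.6666 2.77 410 1 0 0 0.000055 5.262 1.9593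
      hl hu hua hub h2 (lam_of hT hu hub h2 (by norm_num) (by norm_num)) (by norm_num)
      (by norm_num) (by norm_num) (by norm_num) (by norm_num) (by norm_num) (by norm_num) (by norm_num)
      (by norm_num) (by norm_num) (Or.inl rfl) (by norm_num) (by norm_num) (by norm_num)

lemma strip2 {T l u : ℝ} (hl : 0 < l) (hT : 0 < T) (hu : l ^ 2 = u * T)
    (hua : 2.77 ≤ u) (hub : u ≤ 2.85) (hTu : 39.478 * u ≤ T) (hlam : l ≤ 0.15916 * T) : Good T l := by
  rcases le_total T 155 with h1 | h1
  · exact cell 0.268 0.85975 0.30801 0.081565 2.7034 0.15916 2.77 2.85 109.35 155 1.245 0.2844 0.001241 2.769 2.0105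
      hl hu hua hub (by linarith) hlam (by norm_num)
      (by norm_num) (by norm_num) (by norm_num) (by norm_num) (by norm_num) (by norm_num) (by norm_num)
      (by norm_num) (by norm_num) (Or.inr ⟨h1, by norm_num, by norm_num, by norm_num, by norm_num, by norm_num⟩) (by norm_num) (by norm_num) (by norm_num)
  rcases le_total T 280 with h2 | h2
  · exact cell 0.271 0.85667 0.3125 0.083656 2.7083 0.1356 2.77 2.85 155 280 2.243 0.1019 0.001345 3.297 1.996
      hl hu hua hub h1 (lam_of hT hu hub h1 (by norm_num) (by norm_num)) (by norm_num)
      (by norm_num) (by norm_num) (by norm_num) (by norm_num) (by norm_num) (by norm_num) (by norm_num)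
      (by norm_num) (by norm_num) (Or.inr ⟨h2, by norm_num, by norm_num, by norm_num, by norm_num, by norm_num⟩) (by norm_num) (by norm_num) (by norm_num)
  exact cell 0.273 0.8546 0.31551 0.08507 2.7115 0.10089 2.77 2.85 280 1 0 0 0.001387 4.432 1.9855
      hl hu hua hub h2 (lam_of hT hu hub h2 (by norm_num) (by norm_num)) (by norm_num)
      (by norm_num) (by norm_num) (by norm_num) (by norm_num) (by norm_num) (by norm_num) (by norm_num)
      (by norm_num) (by norm_num) (Or.inl rfl) (by norm_num) (by norm_num) (by norm_num)

lemma strip3 {T l u : ℝ} (hl : 0 < l) (hT : 0 < T) (hu : l ^ 2 = u * T)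
    (hua : 2.85 ≤ u) (hub : u ≤ 2.91) (hTu : 39.478 * u ≤ T) (hlam : l ≤ 0.15916 * T) : Good T l := by
  rcases le_total T 155 with h1 | h1
  · exact cell 0.264 0.86381 0.3021 0.078831 2.6971 0.15916 2.85 2.91 112.51 155 1.628 0.1922 0.002192 2.849 2.026
      hl hu hua hub (by linarith) hlam (by norm_num)
      (by norm_num) (by norm_num) (by norm_num) (by norm_num) (by norm_num) (by norm_num) (by norm_num)
      (by norm_num) (by norm_num) (Or.inr ⟨h1, by norm_num, by norm_num, by norm_num, by norm_num, by norm_num⟩) (by norm_num) (by norm_num) (by norm_num)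
  exact cell 0.266 0.86179 0.30504 0.080188 2.7002 0.13702 2.85 2.91 155 1 0 0 0.002258 3.345 2.0152
      hl hu hua hub h1 (lam_of hT hu hub h1 (by norm_num) (by norm_num)) (by norm_num)
      (by norm_num) (by norm_num) (by norm_num) (by norm_num) (by norm_num) (by norm_num) (by norm_num)
      (by norm_num) (by norm_num) (Or.inl rfl) (by norm_num) (by norm_num) (by norm_num)

lemma strip4 {T l u : ℝ} (hl : 0 < l) (hT : 0 < T) (hu : l ^ 2 = u * T)
    (hua : 2.91 ≤ u) (hub : u ≤ 2.97) (hTu : 39.478 * u ≤ T) (hlam : l ≤ 0.15916 * T) : Good T l := by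
  rcases le_total T 155 with h1 | h1
  · exact cell 0.261 0.86682 0.2977 0.076822 2.6924 0.15916 2.91 2.97 114.88 155 1.997 0.1314 0.002832 2.909 2.038
      hl hu hua hub (by linarith) hlam (by norm_num)
      (by norm_num) (by norm_num) (by norm_num) (by norm_num) (by norm_num) (by norm_num) (by norm_num)
      (by norm_num) (by norm_num) (Or.inr ⟨h1, by norm_num, by norm_num, by norm_num, by norm_num, by norm_num⟩) (by norm_num) (by norm_num) (by norm_num)
  exact cell 0.263 0.86482 0.30062 0.078155 2.6955 0.13843 2.91 2.97 155 1 0 0 0.002892 3.38 2.0272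
      hl hu hua hub h1 (lam_of hT hu hub h1 (by norm_num) (by norm_num)) (by norm_num)
      (by norm_num) (by norm_num) (by norm_num) (by norm_num) (by norm_num) (by norm_num) (by norm_num)
      (by norm_num) (by norm_num) (Or.inl rfl) (by norm_num) (by norm_num) (by norm_num)

lemma strip5 {T l u : ℝ} (hl : 0 < l) (hT : 0 < T) (hu : l ^ 2 = u * T)
    (hua : 2.97 ≤ u) (hub : u ≤ 3.03) (hTu : 39.478 * u ≤ T) (hlam : l ≤ 0.15916 * T) : Good T l := by
  rcases le_total T 185 with h1 | h1
  · exact cell 0.258 0.86979 0.29336 0.074852 2.6878 0.15916 2.97 3.03 117.24 185 2.813 0.0563 0.00341 2.969 2.0503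
      hl hu hua hub (by linarith) hlam (by norm_num)
      (by norm_num) (by norm_num) (by norm_num) (by norm_num) (by norm_num) (by norm_num) (by norm_num)
      (by norm_num) (by norm_num) (Or.inr ⟨h1, by norm_num, by norm_num, by norm_num, by norm_num, by norm_num⟩) (by norm_num) (by norm_num) (by norm_num)
  exact cell 0.26 0.86781 0.29626 0.076163 2.6908 0.12798 2.97 3.03 185 1 0 0 0.003463 3.73 2.0382
      hl hu hua hub h1 (lam_of hT hu hub h1 (by norm_num) (by norm_num)) (by norm_num)
      (by norm_num) (by norm_num) (by norm_num) (by norm_num) (by norm_num) (by norm_num) (by norm_num)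
      (by norm_num) (by norm_num) (Or.inl rfl) (by norm_num) (by norm_num) (by norm_num)

lemma strip6 {T l u : ℝ} (hl : 0 < l) (hT : 0 < T) (hu : l ^ 2 = u * T)
    (hua : 3.03 ≤ u) (hub : u ≤ 3.077) (hTu : 39.478 * u ≤ T) (hlam : l ≤ 0.15916 * T) : Good T l := by
  exact cell 0.255 0.87274 0.28904 0.072909 2.6832 0.15916 3.03 3.077 119.61 1 0 0 0.003948 3.029 2.0629
      hl hu hua hub (by linarith) hlam (by norm_num)
      (by norm_num) (by norm_num) (by norm_num) (by norm_num) (by norm_num) (by norm_num) (by norm_num)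
      (by norm_num) (by norm_num) (Or.inl rfl) (by norm_num) (by norm_num) (by norm_num)

end HZ

namespace HZ

lemma caseA {T l u : ℝ} (hT : 100 ≤ T) (hl : 0 ≤ l) (hu : l ^ 2 = u * T)
    (lam ε ub : ℝ) (hu0 : 0 ≤ u) (hub : u ≤ ub) (hub1 : ub ≤ 2.6666) (hlam : l ≤ lam * T) (hlam0 : 0 ≤ lam)
    (he : 0 ≤ ε) (hε : 1 / 0.84478 ≤ ε * (2.5 * Real.exp (0.48 * u * T * 0.2823 ^ 2)))
    (hQ : 2.7274 * 1.9592 * ((1 + ε) * (lam * (1 + 0.32984) + 0.01184) + ub * (0.32984 + 0.32984 ^ 2)) / 2 ≤ 4.328) :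
    Good T l := by
  have hT0 : 0 < T := by linarith
  refine ⟨0.2823, by norm_num, le_rfl, ?_⟩
  have hco := core (T := T) (l := l) (u := u) (θ := 0.2823) (c1 := 0.84478) (a := 0.32984) (S := 0.091872)
    (K := 2.7274) (lam := lam) (ε := ε)
    hT0 hl hu (by norm_num) le_rfl (by norm_num) (le_trans (by norm_num) (cos_lb (by norm_num) (by norm_num)))
    (by norm_num) (by norm_num) (by norm_num) (by norm_num) (by norm_num) hlam he hε
  have hPP : PP 0.2823 T ≤ 1.9592 := by
    have : PP 0.2823 T ≤ PP 0.2823 100 := by unfold PP; gcongr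
    refine this.trans ?_
    unfold PP; norm_num
  have P0 := PP_pos (θ := 0.2823) (by norm_num) hT0
  have hc : 1 / (0.84478 * T) ≤ 0.01184 := by
    rw [div_le_iff₀ (by positivity)]; linarith
  have hex : Real.exp (T * (u * 0.091872 / 2 - 0.2823)) ≤ Real.exp (-0.1598 * T) := by
    apply Real.exp_le_exp.2
    have : u * 0.091872 / 2 - 0.2823 ≤ -0.1598 := by linarith
    calc _ ≤ T * (-0.1598) := by gcongr
      _ = _ := by ring
  have h2 : 0 ≤ 0.802 * (l / (2 * Real.pi)) * Real.exp (-0.1065 * (2 * T / l) ^ 2) := by positivity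
  refine hco.trans (le_trans ?_ (le_add_of_nonneg_right h2))
  refine mul_le_mul (le_trans ?_ hQ) hex (Real.exp_pos _).le (by norm_num)
  gcongr

lemma polyB1 {x c : ℝ} (h0 : 0 ≤ x) (h1 : x ≤ 0.06761) (hc : c = 1 - 2 * x + 0.66 * x ^ 2) :
    (1 - c) / 2 ≤ 1.145 ^ 2 * (c ^ 2 * x) := by
  have h2 : 0.9969 - 1.911 * x ≤ c := by rw [hc]; nlinarith [sq_nonneg (x - 0.0676)]
  have h3 : (0.9969 - 1.911 * x) ^ 2 ≤ c ^ 2 := by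
    apply pow_le_pow_left₀ _ h2
    linarith
  have h4 : 1 - 0.33 * x ≤ 1.145 ^ 2 * (0.9969 - 1.911 * x) ^ 2 := by
    nlinarith [sq_nonneg (x - 0.06761)]
  have h5 : (1 - 0.33 * x) * x ≤ 1.145 ^ 2 * c ^ 2 * x := by
    gcongr
    linarith
  have h6 : (1 - c) / 2 = (1 - 0.33 * x) * x := by rw [hc]; ring
  rw [h6]; linarith

lemma polyB2 {x c : ℝ} (h0 : 0 ≤ x) (h1 : x ≤ 0.06761) (hc : c = 1 - 2 * x + 0.66 * x ^ 2) :
    (1 - c) / 2 ≤ 1.128 * x * c := by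
  have : 0 ≤ x * (1.128 * c - (1 - 0.33 * x)) := by
    apply mul_nonneg h0
    rw [hc]; nlinarith
  have h6 : (1 - c) / 2 = (1 - 0.33 * x) * x := by rw [hc]; ring
  rw [h6]; linarith

lemma caseB {T l u : ℝ} (hl : 0 < l) (hu : l ^ 2 = u * T) (hu0 : 3.0769 ≤ u)
    (hTu : 39.478 * u ≤ T) (hlam : l ≤ 0.15916 * T) : Good T l := by
  have u0 : 0 < u := by linarith
  have hT0 : 0 < T := by linarith
  have hT : 121 ≤ T := by linarith
  obtain ⟨θ, hθ⟩ : ∃ θ, θ = 0.8 / u := ⟨_, rfl⟩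
  have θ0 : 0 < θ := by rw [hθ]; positivity
  have uθ : u * θ = 0.8 := by rw [hθ]; field_simp
  have θ1 : θ ≤ 0.26001 := by rw [hθ, div_le_iff₀ u0]; linarith
  have hx0 : 0 < θ ^ 2 := by positivity
  have hx1 : θ ^ 2 ≤ 0.06761 := by nlinarith
  have Tθ : 31.58 ≤ T * θ := by
    have := mul_le_mul_of_nonneg_right hTu θ0.le
    linarith
  have hc8 : 0.8677 ≤ 1 - 2 * θ ^ 2 + 0.66 * (θ ^ 2) ^ 2 := by nlinarith
  refine ⟨θ, θ0, by linarith, ?_⟩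
  obtain ⟨c1, hc1⟩ : ∃ c, c = 1 - 2 * θ ^ 2 + 0.66 * (θ ^ 2) ^ 2 := ⟨_, rfl⟩
  obtain ⟨x, hx⟩ : ∃ x, x = θ ^ 2 := ⟨_, rfl⟩
  rw [← hx] at hx0 hx1 hc8 hc1
  have c8 : 0.8677 ≤ c1 := by rw [hc1]; exact hc8
  have hco := core (T := T) (l := l) (u := u) (θ := θ) (c1 := c1) (a := 1.145 * θ) (S := 1.128 * θ ^ 2)
    (K := 2.691) (lam := 0.15916) (ε := 0.001)
    hT0 hl.le hu θ0 (by linarith) (by linarith)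
    (by
      refine le_trans ?_ (cos_lb (by linarith) (by linarith))
      have e : 1 - (2 * θ) ^ 2 / 2 + (2 * θ) ^ 4 / 24 - (2 * θ) ^ 6 / 720 - (2 * θ) ^ 8 * (9 / 322560) =
        1 - 2 * x + (2/3) * x ^ 2 - (4/45) * x ^ 3 - x ^ 4 * (1 / 140) := by rw [hx]; ring
      rw [e, hc1]
      have : 0 ≤ x ^ 2 * (2/3 - 0.66 - (4/45) * x - x ^ 2 / 140) := by
        apply mul_nonneg (by positivity)
        nlinarith
      nlinarith)
    (by positivity)
    (by
      have e : (1.145 * θ * c1) ^ 2 = 1.145 ^ 2 * (c1 ^ 2 * x) := by rw [hx]; ring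
      rw [e]; exact polyB1 hx0.le hx1 hc1)
    (by rw [← hx]; exact polyB2 hx0.le hx1 hc1)
    (by norm_num) (by linarith) hlam (by norm_num)
    (by
      have e8 : 2800 ≤ Real.exp (0.48 * u * T * θ ^ 2) := exp8 (by
        have : 0.48 * u * T * θ ^ 2 = 0.48 * (u * θ) * (T * θ) := by ring
        rw [this, uθ]; linarith)
      have : 1 / c1 ≤ 1.25 := by rw [div_le_iff₀ (by linarith)]; linarith
      linarith)
  have hPP : PP θ T ≤ u * 0.6636 := by
    have hY : 0.0807 / (T * θ ^ 2) = 0.0807 / (T * θ) / θ := by field_simp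
    have hz : 0.0807 / (T * θ) ≤ 0.00256 := by
      rw [div_le_iff₀ (by positivity)]; linarith
    have e : PP θ T = (0.3109 + 0.6995 * θ + 0.5246 * x + 0.0807 / (T * θ)) / θ := by
      unfold PP; rw [hY, hx]; field_simp
    rw [e, div_le_iff₀ θ0]
    have : u * 0.6636 * θ = 0.6636 * (u * θ) := by ring
    rw [this, uθ]
    linarith
  have P0 := PP_pos θ0 hT0
  have hc : 1 / (c1 * T) ≤ 0.00953 := by
    rw [div_le_iff₀ (mul_pos (by linarith) hT0)]
    have : 0.8677 * 121 ≤ c1 * T := by gcongr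
    linarith
  have hbr : (1 + 0.001) * (0.15916 * (1 + 1.145 * θ) + 1 / (c1 * T)) + u * (1.145 * θ + (1.145 * θ) ^ 2) ≤ 1.406 := by
    have e : u * (1.145 * θ + (1.145 * θ) ^ 2) = (u * θ) * (1.145 + 1.145 ^ 2 * θ) := by ring
    rw [e, uθ]; linarith
  refine combine hT0 hl hu hco (e1 := 0) (e2 := 1.668) (D := 0.9999 * u) (Real.exp_pos _).le ?_ (by norm_num)
    (by positivity) ?_ ?_
  · refine le_trans ?_ ((exp_ge_cubic (z := 0.514) (by norm_num)).trans (Real.exp_le_exp.2 ?_))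
    · norm_num
    · have e : T * (θ - u * (1.128 * θ ^ 2) / 2 - 0.426 / u) = (T * θ) * (1 - 0.564 * (u * θ) - 0.5325) := by
        have : 0.426 / u = 0.5325 * θ := by rw [hθ]; ring
        rw [this]; ring
      rw [e, uθ]; linarith
  · have : (6.2832 * (0.9999 * u)) ^ 2 = u * (6.2832 ^ 2 * 0.9999 ^ 2 * u) := by ring
    rw [this]
    gcongr; linarith
  · calc _ ≤ 2.691 * (u * 0.6636) * 1.406 / 2 := by gcongr
      _ ≤ _ := by linarith

lemma good_all {T l : ℝ} (hT : 100 ≤ T) (hl : 0 ≤ l) (h : 2 * Real.pi * l ≤ T) : Good T l := by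
  have hT0 : 0 < T := by linarith
  obtain ⟨u, hu'⟩ : ∃ u, u = l ^ 2 / T := ⟨_, rfl⟩
  have hu : l ^ 2 = u * T := by rw [hu']; field_simp
  have hu0 : 0 ≤ u := by rw [hu']; positivity
  have pi1 := Real.pi_gt_d6
  have hlam : l ≤ 0.15916 * T := by
    have : 2 * 3.141592 * l ≤ T := le_trans (by gcongr) h
    linarith
  have hTu : 39.478 * u ≤ T := by
    have h1 : 2 * 3.141592 * l ≤ T := le_trans (by gcongr) h
    have h2 : (2 * 3.141592 * l) ^ 2 ≤ T ^ 2 := by gcongr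
    rw [mul_pow, hu] at h2
    have h3 : (2 * 3.141592) ^ 2 * u ≤ T := by
      have : (2 * 3.141592) ^ 2 * u * T ≤ T * T := by linarith
      exact le_of_mul_le_mul_right this hT0
    linarith
  rcases le_total u 1.3333 with g | g
  · refine caseA hT hl hu 0.1155 0.475 1.3333 hu0 g (by norm_num)
      (lam_of (ub := 1.3333) (Ta := 100) hT0 hu g hT (by norm_num) (by norm_num)) (by norm_num) (by norm_num) ?_ (by norm_num)
    have : 1 ≤ Real.exp (0.48 * u * T * 0.2823 ^ 2) := Real.one_le_exp (by positivity)
    linarith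
  rcases le_total u 2.6666 with g1 | g1
  · refine caseA hT hl hu 0.15916 0.02 2.6666 hu0 g1 (by norm_num) hlam (by norm_num) (by norm_num) ?_ (by norm_num)
    have : 1.3333 * 100 ≤ u * T := by gcongr
    have h5 : (5:ℝ) ≤ 0.48 * u * T * 0.2823 ^ 2 := by norm_num at *; linarith
    have := (exp_ge_cubic (z := 5) (by norm_num)).trans (Real.exp_le_exp.2 h5)
    linarith
  have hl0 : 0 < l := by
    rcases hl.eq_or_lt with e | e
    · rw [← e] at hu'; norm_num at hu'; rw [hu'] at g; norm_num at g
    · exact e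
  rcases le_total u 2.77 with g2 | g2
  · exact strip1 hl0 hT0 hu g1 g2 hTu hlam
  rcases le_total u 2.85 with g3 | g3
  · exact strip2 hl0 hT0 hu g2 g3 hTu hlam
  rcases le_total u 2.91 with g4 | g4
  · exact strip3 hl0 hT0 hu g3 g4 hTu hlam
  rcases le_total u 2.97 with g5 | g5
  · exact strip4 hl0 hT0 hu g4 g5 hTu hlam
  rcases le_total u 3.03 with g6 | g6
  · exact strip5 hl0 hT0 hu g5 g6 hTu hlam
  rcases le_total u 3.077 with g7 | g7
  · exact strip6 hl0 hT0 hu g6 g7 hTu hlam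
  exact caseB hl0 hu (by linarith) hTu hlam
end HZ

namespace HZ
open ComplexConjugate
variable {q : ℕ} [NeZero q] {χ : DirichletCharacter ℂ q}

lemma Fdelta_eq (δ : ℝ) (s : ℂ) : Fdelta δ s = II (2 * Real.pi * δ) s 1 := by
  unfold Fdelta II mellin
  refine setIntegral_congr_fun measurableSet_Ioi fun r _ => ?_
  simp only [kk, e2pi, smul_eq_mul, Complex.ofReal_exp]
  rw [← Complex.exp_add]
  congr 2
  push_cast
  ring

lemma norm_II_conj (l : ℝ) (s : ℂ) : ‖II l (conj s) 1‖ = ‖II (-l) s 1‖ := by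
  rw [← Complex.norm_conj (II (-l) s 1)]
  congr 1
  unfold II
  rw [← integral_conj]
  refine setIntegral_congr_fun measurableSet_Ioi fun r (hr : 0 < r) => ?_
  simp only [kk, map_mul, ← Complex.exp_conj]
  have harg : Complex.arg (r:ℂ) ≠ Real.pi := by
    rw [Complex.arg_ofReal_of_nonneg hr.le]; exact Real.pi_pos.ne
  have h1 : (r:ℂ) ^ (conj s - 1) = conj ((r:ℂ) ^ (s - 1)) := by
    have := Complex.cpow_conj (r:ℂ) (s - 1) harg
    rw [map_sub, map_one, Complex.conj_ofReal] at this
    rw [this]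
  rw [h1]
  congr 2
  have h2 : conj (2:ℂ) = 2 := Complex.conj_ofNat 2
  simp [Complex.conj_ofReal, h2]

lemma Z_sum (hχ : χ.IsPrimitive) {T θ θ₀ l b : ℝ} (hT : 100 ≤ T) (h0 : 0 < θ) (h1 : θ ≤ 0.2823) (h2 : θ ≤ θ₀)
    (h3 : θ₀ < Real.pi / 4) (hb : -l * Real.sin θ₀ ≤ b)
    (Z : Finset ℂ) (hZ : ∀ z ∈ Z, χ.LFunction z = 0 ∧ 0 < z.re ∧ z.re < 1 ∧ T < z.im)
    (hr : ∀ z ∈ Z, 1 - conj z ∈ Z) :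
    ∑ z ∈ Z, ‖II l z 1‖ ≤ Real.log (q * T / (2 * Real.pi)) *
      (Real.exp (-θ₀ * T) * PP θ T * HH (Real.cos (2 * θ₀)) b |l| / T) := by
  have hT0 : 0 < T := by linarith
  obtain ⟨A, hA⟩ : ∃ A, A = mm (Real.cos (2 * θ₀)) b 1 + |l| * mm (Real.cos (2 * θ₀)) b 0 := ⟨_, rfl⟩
  obtain ⟨B, hB⟩ : ∃ B, B = mm (Real.cos (2 * θ₀)) b 2 + |l| * mm (Real.cos (2 * θ₀)) b 1 := ⟨_, rfl⟩
  have m0 := mm_nonneg (Real.cos (2 * θ₀)) b 0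
  have m1 := mm_nonneg (Real.cos (2 * θ₀)) b 1
  have m2 := mm_nonneg (Real.cos (2 * θ₀)) b 2
  have A0 : 0 ≤ A := by rw [hA]; positivity
  have B0 : 0 ≤ B := by rw [hB]; positivity
  have hH : HH (Real.cos (2 * θ₀)) b |l| = (A + B) / 2 := by unfold HH; rw [hA, hB]; ring
  have key : ∀ z ∈ Z, ‖II l z 1‖ ≤ Real.exp (-θ₀ * T) / T *
      (Real.exp (-θ * (z.im - T)) * ((1 - z.re) * A + z.re * B)) := by
    intro z hz
    obtain ⟨_, z1, z2, z3⟩ := hZ z hz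
    have hF := F_bound (l := l) z1 z2 (h0.trans_le h2) h3 hb
    rw [← hA, ← hB] at hF
    have hn := norm_nonneg (II l z 1)
    have hAB : 0 ≤ (1 - z.re) * A + z.re * B :=
      add_nonneg (mul_nonneg (by linarith) A0) (mul_nonneg z1.le B0)
    have he : Real.exp (-θ₀ * z.im) ≤ Real.exp (-θ₀ * T) * Real.exp (-θ * (z.im - T)) := by
      rw [← Real.exp_add, Real.exp_le_exp]
      nlinarith
    have : T * ‖II l z 1‖ ≤ Real.exp (-θ₀ * T) * Real.exp (-θ * (z.im - T)) * ((1 - z.re) * A + z.re * B) :=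
      (mul_le_mul_of_nonneg_right z3.le hn).trans (hF.trans (mul_le_mul_of_nonneg_right he hAB))
    rw [div_mul_eq_mul_div, le_div_iff₀ hT0]
    linarith
  have hS := S_bound hχ hT h0 h1 Z hZ hr
  have hpair : ∑ z ∈ Z, Real.exp (-θ * (z.im - T)) * ((1 - z.re) * A + z.re * B) =
      (A + B) / 2 * ∑ z ∈ Z, Real.exp (-θ * (z.im - T)) := by
    have := inv_sum Z hr (fun z => Real.exp (-θ * (z.im - T)) * ((1 - z.re) * A + z.re * B))
    have h4 : ∑ z ∈ Z, Real.exp (-θ * (z.im - T)) * ((1 - z.re) * A + z.re * B)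
        + ∑ z ∈ Z, Real.exp (-θ * ((1 - conj z).im - T)) * ((1 - (1 - conj z).re) * A + (1 - conj z).re * B) =
        (A + B) * ∑ z ∈ Z, Real.exp (-θ * (z.im - T)) := by
      rw [← Finset.sum_add_distrib, Finset.mul_sum]
      refine Finset.sum_congr rfl fun z _ => ?_
      simp only [Complex.sub_im, Complex.one_im, Complex.conj_im, Complex.sub_re, Complex.one_re, Complex.conj_re]
      rw [zero_sub, neg_neg]; ring
    linarith
  calc ∑ z ∈ Z, ‖II l z 1‖ ≤ Real.exp (-θ₀ * T) / T * ((A + B) / 2 * ∑ z ∈ Z, Real.exp (-θ * (z.im - T))) := by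
        rw [← hpair, Finset.mul_sum]; exact Finset.sum_le_sum key
    _ ≤ Real.exp (-θ₀ * T) / T * ((A + B) / 2 * (Real.log (q * T / (2 * Real.pi)) * PP θ T)) := by
        gcongr; exact hS
    _ = _ := by rw [hH]; ring

lemma unfav (hχ : χ.IsPrimitive) {T l : ℝ} (hT : 100 ≤ T) (hl : 0 ≤ l) (h : 2 * Real.pi * l ≤ T)
    (Z : Finset ℂ) (hZ : ∀ z ∈ Z, χ.LFunction z = 0 ∧ 0 < z.re ∧ z.re < 1 ∧ T < z.im)
    (hr : ∀ z ∈ Z, 1 - conj z ∈ Z) :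
    ∑ z ∈ Z, ‖II (-l) z 1‖ ≤ Real.log (q * T / (2 * Real.pi)) *
      (4.328 * Real.exp (-0.1598 * T) + 0.802 * (l / (2 * Real.pi)) * Real.exp (-0.1065 * (2 * T / l) ^ 2)) := by
  obtain ⟨θ, h0, h1, hG⟩ := good_all hT hl h
  have hL : 0 ≤ Real.log (q * T / (2 * Real.pi)) := by have := L_ge (q := q) hT; linarith
  refine (Z_sum hχ hT h0 h1 le_rfl (by have := Real.pi_gt_three; linarith) (b := l * Real.sin θ) (by linarith) Z hZ hr).trans ?_
  rw [abs_neg, abs_of_nonneg hl]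
  exact mul_le_mul_of_nonneg_left hG hL

lemma fav (hχ : χ.IsPrimitive) {T l : ℝ} (hT : 100 ≤ T) (hl : 0 ≤ l) (h : 2 * Real.pi * l ≤ T)
    (Z : Finset ℂ) (hZ : ∀ z ∈ Z, χ.LFunction z = 0 ∧ 0 < z.re ∧ z.re < 1 ∧ T < z.im)
    (hr : ∀ z ∈ Z, 1 - conj z ∈ Z) :
    ∑ z ∈ Z, ‖II l z 1‖ ≤ Real.log (q * T / (2 * Real.pi)) * (0.001 * Real.exp (-0.1598 * T)) := by
  have hT0 : 0 < T := by linarith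
  have hL : 0 ≤ Real.log (q * T / (2 * Real.pi)) := by have := L_ge (q := q) hT; linarith
  have hs : 0 ≤ Real.sin 0.5 := Real.sin_nonneg_of_nonneg_of_le_pi (by norm_num) (by have := Real.pi_gt_three; linarith)
  refine (Z_sum hχ hT (θ := 0.2823) (θ₀ := 0.5) (by norm_num) le_rfl (by norm_num)
    (by have := Real.pi_gt_three; linarith) (b := 0) (by nlinarith [mul_nonneg hl hs]) Z hZ hr).trans ?_
  refine mul_le_mul_of_nonneg_left ?_ hL
  rw [abs_of_nonneg hl]
  obtain ⟨c, hc⟩ : ∃ c, c = Real.cos (2 * 0.5) := ⟨_, rfl⟩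
  have c5 : 0.54 ≤ c := by rw [hc]; exact le_trans (by norm_num) (cos_lb (by norm_num) (by norm_num))
  rw [← hc]
  have c0 : 0 < c := by linarith
  have m1 := mm1 c0 0
  have m2 := mm2 c0 0
  have m0 := mm0_le c0 0
  have n1 := mm_nonneg c 0 1
  have n2 := mm_nonneg c 0 2
  have n0 := mm_nonneg c 0 0
  have k0 : mm c 0 0 ≤ 3.42 := by
    refine m0.trans ?_
    norm_num
    refine Real.sqrt_le_iff.2 ⟨by norm_num, ?_⟩
    rw [div_le_iff₀ c0]
    have := Real.pi_lt_d4
    norm_num at *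
    linarith
  have k1 : mm c 0 1 ≤ 1.852 := by nlinarith
  have k2 : mm c 0 2 ≤ 6.34 := by nlinarith
  have hlT : l ≤ 0.17 * T := by
    have : 2 * 3 * l ≤ T := le_trans (by gcongr; exact Real.pi_gt_three.le) h
    linarith
  have hH : HH c 0 l / T ≤ 0.5 := by
    rw [div_le_iff₀ hT0]
    unfold HH
    have : l * mm c 0 0 ≤ l * 3.42 := by gcongr
    have : (1 + l) * mm c 0 1 ≤ (1 + l) * 1.852 := by gcongr
    linarith
  have hPP : PP 0.2823 T ≤ 1.9592 := by
    have : PP 0.2823 T ≤ PP 0.2823 100 := by unfold PP; gcongr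
    refine this.trans ?_
    unfold PP; norm_num
  have P0 := PP_pos (θ := 0.2823) (by norm_num) hT0
  have hH0 : 0 ≤ HH c 0 l / T := by unfold HH; positivity
  have hX : Real.exp (-0.5 * T) ≤ 1 / 2800 * Real.exp (-0.1598 * T) := by
    have e : Real.exp (-0.1598 * T) = Real.exp (0.3402 * T) * Real.exp (-0.5 * T) := by
      rw [← Real.exp_add]; congr 1; ring
    have h8 := exp8 (x := 0.3402 * T) (by linarith)
    rw [e]
    have := mul_le_mul_of_nonneg_right h8 (Real.exp_pos (-0.5 * T)).le
    linarith
  calc Real.exp (-0.5 * T) * PP 0.2823 T * HH c 0 l / T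
      = Real.exp (-0.5 * T) * PP 0.2823 T * (HH c 0 l / T) := by ring
    _ ≤ (1 / 2800 * Real.exp (-0.1598 * T)) * 1.9592 * 0.5 := by gcongr
    _ ≤ _ := by
      have := Real.exp_pos (-0.1598 * T)
      linarith
end HZ

namespace HZ
open ComplexConjugate
variable {q : ℕ} [NeZero q] {χ : DirichletCharacter ℂ q}

lemma conj_zero {T : ℝ} {z : ℂ} (h : χ.LFunction z = 0 ∧ 0 < z.re ∧ z.re < 1 ∧ z.im < -T) :
    χ⁻¹.LFunction (conj z) = 0 ∧ 0 < (conj z).re ∧ (conj z).re < 1 ∧ T < (conj z).im := by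
  obtain ⟨h1, h2, h3, h4⟩ := h
  refine ⟨?_, by simpa using h2, by simpa using h3, by simp; linarith⟩
  rw [LFunction_conj χ (by intro h; have := congrArg Complex.re h; simp at this; linarith), Complex.conj_conj, h1, map_zero]

lemma total (hχ : χ.IsPrimitive) {T l : ℝ} (hT : 100 ≤ T) (h : 2 * Real.pi * |l| ≤ T)
    (Z : Finset ℂ) (hZ : ∀ z ∈ Z, χ.LFunction z = 0 ∧ 0 < z.re ∧ z.re < 1 ∧ T < |z.im|)
    (hr : ∀ z ∈ Z, 1 - conj z ∈ Z) :
    ∑ z ∈ Z, ‖II l z 1‖ ≤ Real.log (q * T / (2 * Real.pi)) *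
      (4.329 * Real.exp (-0.1598 * T) + 0.802 * (|l| / (2 * Real.pi)) * Real.exp (-0.1065 * (2 * T / |l|) ^ 2)) := by
  classical
  let Zp := Z.filter (fun z => T < z.im)
  let Zm := (Z.filter (fun z => ¬ T < z.im)).image (fun z => conj z)
  have hneg : ∀ z ∈ Z.filter (fun z => ¬ T < z.im),
      χ.LFunction z = 0 ∧ 0 < z.re ∧ z.re < 1 ∧ z.im < -T := by
    intro z hz
    rw [Finset.mem_filter] at hz
    obtain ⟨a, b, c, d⟩ := hZ z hz.1
    refine ⟨a, b, c, ?_⟩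
    rcases lt_abs.1 d with d | d
    · exact absurd d hz.2
    · linarith
  have hp : ∀ z ∈ Zp, χ.LFunction z = 0 ∧ 0 < z.re ∧ z.re < 1 ∧ T < z.im := by
    intro z hz
    have hz := Finset.mem_filter.1 hz
    obtain ⟨a, b, c, d⟩ := hZ z hz.1
    exact ⟨a, b, c, hz.2⟩
  have hm : ∀ z ∈ Zm, χ⁻¹.LFunction z = 0 ∧ 0 < z.re ∧ z.re < 1 ∧ T < z.im := by
    intro z hz
    obtain ⟨w, hw, rfl⟩ := Finset.mem_image.1 hz
    exact conj_zero (hneg w hw)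
  have rp : ∀ z ∈ Zp, 1 - conj z ∈ Zp := by
    intro z hz
    have hz := Finset.mem_filter.1 hz
    exact Finset.mem_filter.2 ⟨hr z hz.1, by simpa using hz.2⟩
  have rm : ∀ z ∈ Zm, 1 - conj z ∈ Zm := by
    intro z hz
    obtain ⟨w, hw, rfl⟩ := Finset.mem_image.1 hz
    have hw := Finset.mem_filter.1 hw
    refine Finset.mem_image.2 ⟨1 - conj w, Finset.mem_filter.2 ⟨hr w hw.1, by simpa using hw.2⟩, by simp⟩
  have hsum : ∑ z ∈ Z, ‖II l z 1‖ = ∑ z ∈ Zp, ‖II l z 1‖ + ∑ z ∈ Zm, ‖II (-l) z 1‖ := by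
    rw [← Finset.sum_filter_add_sum_filter_not Z (fun z => T < z.im)]
    congr 1
    rw [Finset.sum_image (fun a _ b _ hab => (starRingEnd ℂ).injective hab)]
    refine Finset.sum_congr rfl fun z _ => ?_
    rw [norm_II_conj, neg_neg]
  rw [hsum]
  have hχ' := inv_primitive hχ
  rcases le_total 0 l with hl | hl
  · rw [abs_of_nonneg hl] at *
    have f1 := fav hχ hT hl h Zp hp rp
    have f2 := unfav hχ' hT hl h Zm hm rm
    refine (add_le_add f1 f2).trans (le_of_eq ?_)
    ring
  · rw [abs_of_nonpos hl] at *
    have f1 := unfav hχ hT (neg_nonneg.2 hl) h Zp hp rp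
    have f2 := fav hχ' hT (neg_nonneg.2 hl) h Zm hm rm
    rw [neg_neg] at f1
    refine (add_le_add f1 f2).trans (le_of_eq ?_)
    ring

end HZ

/-- **Lemma 4.5**: bound on the sum of `|F_δ(ρ)|` over high nontrivial zeros,
for the Gaussian smoothing. -/
theorem sum_Fdelta_high_zeros_bound
    (δ : ℝ) (q : ℕ) [NeZero q] (χ : DirichletCharacter ℂ q) (hχ : χ.IsPrimitive)
    (T₀ : ℝ) (hT₀ : max (4 * Real.pi^2 * |δ|) 100 ≤ T₀)
    (hGRH : ∀ ρ : ℂ, χ.LFunction ρ = 0 → 0 < ρ.re → ρ.re < 1 → |ρ.im| ≤ T₀ →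
      ρ.re = 1/2) :
    (∑' ρ : {ρ : ℂ // χ.LFunction ρ = 0 ∧ 0 < ρ.re ∧ ρ.re < 1 ∧ T₀ < |ρ.im|},
        ‖Fdelta δ ρ‖)
      ≤ Real.log (q * T₀ / (2 * Real.pi))
          * (4.329 * Real.exp (-0.1598 * T₀)
            + 0.802 * |δ| * Real.exp (-0.1065 * (T₀ / (Real.pi * |δ|))^2)) := by
  classical
  have h100 : 100 ≤ T₀ := (le_max_right _ _).trans hT₀
  have hδ : 4 * Real.pi ^ 2 * |δ| ≤ T₀ := (le_max_left _ _).trans hT₀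
  have hpi := Real.pi_pos
  have hal : |2 * Real.pi * δ| = 2 * Real.pi * |δ| := by
    rw [abs_mul, abs_of_pos (by positivity)]
  have hL : 0 ≤ Real.log (q * T₀ / (2 * Real.pi)) := by
    have := HZ.L_ge (q := q) h100
    linarith
  refine Real.tsum_le_of_sum_le (fun _ => norm_nonneg _) ?_
  intro S
  let Z₀ : Finset ℂ := Finset.image Subtype.val S
  let Z : Finset ℂ := Z₀ ∪ Z₀.image (fun z => 1 - (starRingEnd ℂ) z)
  have hZ₀ : ∀ z ∈ Z₀, χ.LFunction z = 0 ∧ 0 < z.re ∧ z.re < 1 ∧ T₀ < |z.im| := by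
    intro z hz
    obtain ⟨w, _, rfl⟩ := Finset.mem_image.1 hz
    exact w.2
  have hZ : ∀ z ∈ Z, χ.LFunction z = 0 ∧ 0 < z.re ∧ z.re < 1 ∧ T₀ < |z.im| := by
    intro z hz
    rcases Finset.mem_union.1 hz with hz | hz
    · exact hZ₀ z hz
    · obtain ⟨w, hw, rfl⟩ := Finset.mem_image.1 hz
      obtain ⟨a, b, c, d⟩ := hZ₀ w hw
      exact ⟨HZ.zero_reflect hχ a b c, by simpa using c, by simpa using b, by simpa using d⟩
  have hr : ∀ z ∈ Z, 1 - (starRingEnd ℂ) z ∈ Z := by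
    intro z hz
    rcases Finset.mem_union.1 hz with hz | hz
    · exact Finset.mem_union_right _ (Finset.mem_image_of_mem _ hz)
    · obtain ⟨w, hw, rfl⟩ := Finset.mem_image.1 hz
      refine Finset.mem_union_left _ ?_
      simpa using hw
  have ht := HZ.total hχ h100 (l := 2 * Real.pi * δ) (by rw [hal]; linarith) Z hZ hr
  have e1 : ∑ ρ ∈ S, ‖Fdelta δ ρ‖ = ∑ z ∈ Z₀, ‖HZ.II (2 * Real.pi * δ) z 1‖ := by
    rw [Finset.sum_image (fun a _ b _ hab => Subtype.ext hab)]
    exact Finset.sum_congr rfl fun z _ => by rw [HZ.Fdelta_eq]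
  rw [e1]
  refine (Finset.sum_le_sum_of_subset_of_nonneg Finset.subset_union_left fun _ _ _ => norm_nonneg _).trans (ht.trans (le_of_eq ?_))
  rw [hal]
  have e2 : 2 * Real.pi * |δ| / (2 * Real.pi) = |δ| := by field_simp
  have e3 : 2 * T₀ / (2 * Real.pi * |δ|) = T₀ / (Real.pi * |δ|) := by
    rw [mul_assoc, mul_div_mul_left _ _ two_ne_zero]
  rw [e2, e3]
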